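/- Assume a_0 is the unique point of ℤ^n lying in the interior of Δ, the convex hull of a_1,…,a_N in ℝ^n. Suppose ξ ∈ S satisfies α*(ξ) = κ·ξ for some κ ∈ K, that ξ_{â_0} is an invertible element of R, and that ‖ξ‖ = ‖ξ_{â_0}‖. Then the ratio ξ_{â_0}(λ)/ξ_{â_0}(λ^p) — where ξ_{â_0}(λ^p) denotes ξ_{â_0} with each λ_i/λ_0 replaced by λ_i^p/λ_0^p — belongs to R'. -/

import Mathlib

open scoped BigOperators Classical

namespace AHG

/-- `hat v = (1, v) ∈ ℤ^{n+1}`: coordinate `0` equals `1`, the rest is `v`. -/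
def hat {n : ℕ} (v : Fin n → ℤ) : Fin (n + 1) → ℤ := Fin.cons 1 v

/-- The coefficients `b_i` of the Dwork series
`θ(t) = exp(π(t - t^p)) = exp(πt)·exp(-πt^p) = Σ b_i t^i`;
explicitly `b_i = Σ_{j + p k = i} π^{j+k} (-1)^k / (j! k!)`. -/
noncomputable def dworkB (p : ℕ) {K : Type*} [Field K] (π : K) (i : ℕ) : K :=
  ∑ k ∈ Finset.range (i + 1),
    if p * k ≤ i then
      ((-1 : K) ^ k * π ^ (i - p * k + k)) /
        ((Nat.factorial (i - p * k) : K) * (Nat.factorial k : K))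
    else 0

/-- The real cone `C` generated by `â_0, …, â_N`. -/
def cone {n N : ℕ} (a : Fin (N + 1) → Fin n → ℤ) : Set (Fin (n + 1) → ℝ) :=
  {x | ∃ t : Fin (N + 1) → ℝ, (∀ j, 0 ≤ t j) ∧
      x = ∑ j, t j • fun i => (hat (a j) i : ℝ)}

/-- `M = C ∩ ℤA`. -/
def latticeM {n N : ℕ} (a : Fin (N + 1) → Fin n → ℤ) : Set (Fin (n + 1) → ℤ) :=
  {μ | (fun i => (μ i : ℝ)) ∈ cone a ∧
      μ ∈ AddSubgroup.closure (Set.range fun j => hat (a j))}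

/-- `M°`: the elements of `M` lying on no proper (exposed) face of `C`, i.e. every linear
functional nonnegative on `C` and vanishing at `μ` vanishes identically on `C`. -/
def latticeMint {n N : ℕ} (a : Fin (N + 1) → Fin n → ℤ) : Set (Fin (n + 1) → ℤ) :=
  {μ | μ ∈ latticeM a ∧
      ∀ ℓ : (Fin (n + 1) → ℝ) →ₗ[ℝ] ℝ, (∀ x ∈ cone a, 0 ≤ ℓ x) →
        ℓ (fun i => (μ i : ℝ)) = 0 → ∀ x ∈ cone a, ℓ x = 0}

/-- `a 0` is the unique lattice point interior to `Δ = conv(a 1, …, a N)`. -/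
def uniqueInteriorPoint {n N : ℕ} (a : Fin (N + 1) → Fin n → ℤ) : Prop :=
  (fun i => (a 0 i : ℝ)) ∈
      interior (convexHull ℝ (Set.range fun j : Fin N => fun i => (a j.succ i : ℝ))) ∧
    ∀ v : Fin n → ℤ,
      (fun i => (v i : ℝ)) ∈
          interior (convexHull ℝ (Set.range fun j : Fin N => fun i => (a j.succ i : ℝ))) →
        v = a 0

/-- The set `L_+`, identified with the tuples `(l_1,…,l_N) ∈ ℤ_{≥0}^N` such that
`Σ l_i â_i = (Σ l_i) â_0` (then `l_0 = -Σ l_i`). -/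
def LplusSet {n N : ℕ} (a : Fin (N + 1) → Fin n → ℤ) : Set (Fin N → ℕ) :=
  {l | ∑ i : Fin N, l i • hat (a i.succ) = (∑ i : Fin N, l i) • hat (a 0)}

/-- The norm (sup of coefficient norms) of an element of `R`, i.e. of a formal power series
in the variables `λ_i/λ_0`, `i = 1, …, N`. -/
noncomputable def Rnorm {N : ℕ} {K : Type*} [NormedField K]
    (f : MvPowerSeries (Fin N) K) : ℝ :=
  ⨆ ν : Fin N →₀ ℕ, ‖f ν‖

/-- Membership in `R`: bounded coefficients. -/
def memR {N : ℕ} {K : Type*} [NormedField K] (f : MvPowerSeries (Fin N) K) : Prop :=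
  BddAbove (Set.range fun ν : Fin N →₀ ℕ => ‖f ν‖)

/-- Norm-convergence (in the sup norm of `R`) of a series of elements of `R` to `g`. -/
def HasSumR {ι : Type*} {N : ℕ} {K : Type*} [NormedField K]
    (f : ι → MvPowerSeries (Fin N) K) (g : MvPowerSeries (Fin N) K) : Prop :=
  Filter.Tendsto (fun s : Finset ι => Rnorm (g - ∑ i ∈ s, f i)) Filter.atTop (nhds 0)

/-- Invertibility in `R`. -/
def invR {N : ℕ} {K : Type*} [NormedField K] (f : MvPowerSeries (Fin N) K) : Prop :=
  memR f ∧ ∃ g : MvPowerSeries (Fin N) K, memR g ∧ f * g = 1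

/-- `B_μ(1, y_1, …, y_N)` as a power series (in fact a polynomial) in `y_i = λ_i/λ_0`:
the coefficient of `y^ν` is `b_{ν_0} b_{ν_1} ⋯ b_{ν_N}` where `ν_0 = μ_0 - Σ ν_i`,
whenever `(ν_0, ν_1, …, ν_N)` is a nonnegative solution of `Σ ν_i â_i = μ`, and `0` otherwise. -/
noncomputable def Bone (p : ℕ) {n N : ℕ} (a : Fin (N + 1) → Fin n → ℤ)
    {K : Type*} [Field K] (π : K) (μ : Fin (n + 1) → ℤ) : MvPowerSeries (Fin N) K :=
  fun ν =>
    if 0 ≤ μ 0 - ∑ i : Fin N, (ν i : ℤ) ∧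
        (μ 0 - ∑ i : Fin N, (ν i : ℤ)) • hat (a 0) +
          ∑ i : Fin N, (ν i : ℤ) • hat (a i.succ) = μ then
      dworkB p π (μ 0 - ∑ i : Fin N, (ν i : ℤ)).toNat * ∏ i : Fin N, dworkB p π (ν i)
    else 0

/-- The substitution `λ_i/λ_0 ↦ λ_i^p/λ_0^p` on `R`, i.e. `ξ(λ) ↦ ξ(λ^p)`. -/
noncomputable def frobR (p : ℕ) {N : ℕ} {K : Type*} [Field K]
    (f : MvPowerSeries (Fin N) K) : MvPowerSeries (Fin N) K :=
  fun ν => if h : ∃ ν' : Fin N →₀ ℕ, p • ν' = ν then f h.choose else 0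

/-- The term indexed by `ν ∈ M°` in the series defining `η_ρ`:
`π^{ρ_0-ν_0} B_{pν-ρ}(1, λ_1/λ_0, …, λ_N/λ_0) ξ_ν(λ^p)` when `pν - ρ ∈ M`, else `0`. -/
noncomputable def etaTerm (p : ℕ) {n N : ℕ} (a : Fin (N + 1) → Fin n → ℤ)
    {K : Type*} [Field K] (π : K)
    (ξ : {μ : Fin (n + 1) → ℤ // μ ∈ latticeMint a} → MvPowerSeries (Fin N) K)
    (ρ : Fin (n + 1) → ℤ) (ν : {μ : Fin (n + 1) → ℤ // μ ∈ latticeMint a}) :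
    MvPowerSeries (Fin N) K :=
  if (p : ℤ) • ν.1 - ρ ∈ latticeM a then
    π ^ (ρ 0 - ν.1 0) • (Bone p a π ((p : ℤ) • ν.1 - ρ) * frobR p (ξ ν))
  else 0


/-- The index type `M°` (as a subtype). -/
abbrev Msub {n N : ℕ} (a : Fin (N + 1) → Fin n → ℤ) : Type _ :=
  {μ : Fin (n + 1) → ℤ // μ ∈ latticeMint a}

/-- Membership in `S`: a family `(ξ_μ)_{μ ∈ M°}` of elements of `R` with uniformly
bounded coefficients. -/
def memS {n N : ℕ} (a : Fin (N + 1) → Fin n → ℤ) {K : Type*} [NormedField K]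
    (ξ : {μ : Fin (n + 1) → ℤ // μ ∈ latticeMint a} → MvPowerSeries (Fin N) K) : Prop :=
  BddAbove (Set.range
    fun q : {μ : Fin (n + 1) → ℤ // μ ∈ latticeMint a} × (Fin N →₀ ℕ) => ‖ξ q.1 q.2‖)

/-- The norm on `S`. -/
noncomputable def Snorm {n N : ℕ} (a : Fin (N + 1) → Fin n → ℤ) {K : Type*} [NormedField K]
    (ξ : {μ : Fin (n + 1) → ℤ // μ ∈ latticeMint a} → MvPowerSeries (Fin N) K) : ℝ :=
  ⨆ μ : {μ : Fin (n + 1) → ℤ // μ ∈ latticeMint a}, Rnorm (ξ μ)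

/-- The truncation `Φ_1` of `Φ`, as a function of `λ = (λ_0, …, λ_N)`. -/
noncomputable def Phi1 (p : ℕ) {n N : ℕ} (a : Fin (N + 1) → Fin n → ℤ)
    {K : Type*} [Field K] (lam : Fin (N + 1) → K) : K :=
  ∑ l ∈ (Fintype.piFinset fun _ : Fin N => Finset.range p).filter
      (fun l => l ∈ LplusSet a ∧ ∑ i : Fin N, l i ≤ p - 1),
    (-1 : K) ^ (∑ i : Fin N, l i) * (Nat.multinomial Finset.univ l : K) *
      ∏ i : Fin N, (lam i.succ / lam 0) ^ l i

/-- The open polydisk `𝒟`. -/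
def Dopen {N : ℕ} {K : Type*} [NormedField K] : Set (Fin (N + 1) → K) :=
  {lam | lam 0 ≠ 0 ∧ ∀ i : Fin N, ‖lam i.succ / lam 0‖ < 1}

/-- The region `𝒟_+`. -/
def Dplus (p : ℕ) {n N : ℕ} (a : Fin (N + 1) → Fin n → ℤ) {K : Type*} [NormedField K] :
    Set (Fin (N + 1) → K) :=
  {lam | lam 0 ≠ 0 ∧ (∀ i : Fin N, ‖lam i.succ / lam 0‖ ≤ 1) ∧ ‖Phi1 p a lam‖ = 1}

/-- `f` is (on `𝒟_+`) a rational function of `λ_1/λ_0, …, λ_N/λ_0` defined at every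
point of `𝒟_+`. -/
def RatOnDplus (p : ℕ) {n N : ℕ} (a : Fin (N + 1) → Fin n → ℤ) {K : Type*} [NormedField K]
    (f : (Fin (N + 1) → K) → K) : Prop :=
  ∃ q r : MvPolynomial (Fin N) K,
    (∀ lam ∈ Dplus p a (K := K), MvPolynomial.eval (fun i => lam i.succ / lam 0) r ≠ 0) ∧
    ∀ lam ∈ Dplus p a (K := K),
      f lam = MvPolynomial.eval (fun i => lam i.succ / lam 0) q /
        MvPolynomial.eval (fun i => lam i.succ / lam 0) r

/-- `F` is a uniform limit on `𝒟_+` of rational functions in the `λ_i/λ_0` defined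
at every point of `𝒟_+`. -/
def UnifLimitRat (p : ℕ) {n N : ℕ} (a : Fin (N + 1) → Fin n → ℤ) {K : Type*} [NormedField K]
    (F : (Fin (N + 1) → K) → K) : Prop :=
  ∃ u : ℕ → (Fin (N + 1) → K) → K, (∀ k, RatOnDplus p a (u k)) ∧
    TendstoUniformlyOn u F Filter.atTop (Dplus p a (K := K))

/-- Membership in `R'`: the power series converges on `𝒟` and its sum extends to an
element of `R'`, i.e. to a uniform limit on `𝒟_+` of rational functions in the `λ_i/λ_0`
defined at every point of `𝒟_+`. -/
def memR' (p : ℕ) {n N : ℕ} (a : Fin (N + 1) → Fin n → ℤ) {K : Type*} [NormedField K]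
    (c : MvPowerSeries (Fin N) K) : Prop :=
  ∃ F : (Fin (N + 1) → K) → K, UnifLimitRat p a F ∧
    ∀ lam ∈ Dopen (N := N) (K := K),
      HasSum (fun ν : Fin N →₀ ℕ => c ν * ∏ i : Fin N, (lam i.succ / lam 0) ^ ν i) (F lam)

/-- Invertibility in `R'`. -/
def invR' (p : ℕ) {n N : ℕ} (a : Fin (N + 1) → Fin n → ℤ) {K : Type*} [NormedField K]
    (f : MvPowerSeries (Fin N) K) : Prop :=
  memR' p a f ∧ ∃ g : MvPowerSeries (Fin N) K, memR' p a g ∧ f * g = 1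

/-- Membership in `S'`. -/
def memS' (p : ℕ) {n N : ℕ} (a : Fin (N + 1) → Fin n → ℤ) {K : Type*} [NormedField K]
    (ξ : {μ : Fin (n + 1) → ℤ // μ ∈ latticeMint a} → MvPowerSeries (Fin N) K) : Prop :=
  memS a ξ ∧ ∀ μ, memR' p a (ξ μ)

/-- Membership in `T`: `ξ ∈ S`, `ξ_{â_0} = 1` and `‖ξ‖ = 1`; the distinguished index
`μ0 ∈ M°` is the point `â_0`. -/
def memT {n N : ℕ} (a : Fin (N + 1) → Fin n → ℤ) {K : Type*} [NormedField K]
    (μ0 : {μ : Fin (n + 1) → ℤ // μ ∈ latticeMint a})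
    (ξ : {μ : Fin (n + 1) → ℤ // μ ∈ latticeMint a} → MvPowerSeries (Fin N) K) : Prop :=
  memS a ξ ∧ ξ μ0 = 1 ∧ Snorm a ξ = 1

/-- `ζ` is a value of the map `β` at `ξ`: `ζ = α*(ξ)/η_{â_0}`, where
`α*(ξ) = (η_ρ)_{ρ ∈ M°}` is given by the norm-convergent series of `etaTerm`s. -/
def isBeta (p : ℕ) {n N : ℕ} (a : Fin (N + 1) → Fin n → ℤ) {K : Type*} [NormedField K] (π : K)
    (μ0 : {μ : Fin (n + 1) → ℤ // μ ∈ latticeMint a})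
    (ξ ζ : {μ : Fin (n + 1) → ℤ // μ ∈ latticeMint a} → MvPowerSeries (Fin N) K) : Prop :=
  ∃ η : {μ : Fin (n + 1) → ℤ // μ ∈ latticeMint a} → MvPowerSeries (Fin N) K,
    (∀ ρ, HasSumR (etaTerm p a π ξ ρ.1) (η ρ)) ∧ ∀ ρ, ζ ρ = η ρ * (η μ0)⁻¹

/-- The coefficients `ξ_ρ` (Eq. (3.4) of the paper) of
`ξ(λ,x) = γ°(G(λ_0,x) ∏_{i=1}^N exp(πλ_i x^{â_i}))`:
`ξ_ρ = Σ (-1)^{ρ_0-1+Σl_i} (ρ_0-1+Σl_i)!/(l_1!⋯l_N!) ∏ (λ_i/λ_0)^{l_i}`, summed over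
`(l_1,…,l_N) ∈ ℤ_{≥0}^N` such that `l_0 := ρ_0-1+Σl_i ≥ 0` and
`Σ l_i â_i - (l_0+1) â_0 = -ρ`. -/
noncomputable def xiRho {n N : ℕ} (a : Fin (N + 1) → Fin n → ℤ) (K : Type*) [Field K]
    (ρ : Fin (n + 1) → ℤ) : MvPowerSeries (Fin N) K :=
  fun l =>
    if 0 ≤ ρ 0 - 1 + ∑ i : Fin N, (l i : ℤ) ∧
        (∑ i : Fin N, (l i : ℤ) • hat (a i.succ)) -
          (ρ 0 + ∑ i : Fin N, (l i : ℤ)) • hat (a 0) = -ρ then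
      (-1 : K) ^ (ρ 0 - 1 + ∑ i : Fin N, (l i : ℤ)) *
        ((ρ 0 - 1 + ∑ i : Fin N, (l i : ℤ)).toNat.factorial : K) /
        ((∏ i : Fin N, (l i).factorial : ℕ) : K)
    else 0

/-- The series `Φ`, as a formal power series in the variables `λ_i/λ_0`. -/
noncomputable def PhiSeries {n N : ℕ} (a : Fin (N + 1) → Fin n → ℤ) (K : Type*) [Field K] :
    MvPowerSeries (Fin N) K :=
  fun l =>
    if (fun i => l i) ∈ LplusSet a then
      (-1 : K) ^ (∑ i : Fin N, l i) * (Nat.multinomial Finset.univ l : K)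
    else 0

/-- The truncation `Φ_1` of `Φ`, as a formal power series in the variables `λ_i/λ_0`. -/
noncomputable def Phi1Series (p : ℕ) {n N : ℕ} (a : Fin (N + 1) → Fin n → ℤ)
    (K : Type*) [Field K] : MvPowerSeries (Fin N) K :=
  fun l =>
    if (fun i => l i) ∈ LplusSet a ∧ ∑ i : Fin N, l i ≤ p - 1 then
      (-1 : K) ^ (∑ i : Fin N, l i) * (Nat.multinomial Finset.univ l : K)
    else 0

/-- `B_μ(λ_0, …, λ_N)` as a function of `λ` (a finite sum; `finsum` junk value `0`
is irrelevant since the relevant index set is finite). -/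
noncomputable def Bfull (p : ℕ) {n N : ℕ} (a : Fin (N + 1) → Fin n → ℤ)
    {K : Type*} [Field K] (π : K) (μ : Fin (n + 1) → ℤ) (lam : Fin (N + 1) → K) : K :=
  finsum fun ν : Fin (N + 1) → ℕ =>
    if ∑ j, ν j • hat (a j) = μ then
      (∏ j, dworkB p π (ν j)) * ∏ j, lam j ^ ν j
    else 0

end AHG

open scoped BigOperators Classical

/-!
Since the Artin-Hasse series is `p`-integral, `p ^ (2 m) m!` with `m = ⌊i / p²⌋` is a denominator
for `b_i / π ^ i`. For `c = π ^ (p - 1) / (p - 1)!`, of norm `1 / p`, it follows that in the matrix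
of `α*` every entry outside the column of `â_0` has norm at most `|c|²`, because `â_0` is the only
element of `M°` of degree one. The diagonal entry at `â_0` is `c Φ₁` modulo `c²`.

An invertible `ξ_{â_0}` has constant term of norm `‖ξ_{â_0}‖`, so `ξ` can be divided by `ξ_{â_0}`.
The quotient `ζ` is an eigenvector with `ζ_{â_0} = 1` and eigenvalue
`u = κ ξ_{â_0}(λ) / ξ_{â_0}(λ^p)`, which is congruent to `c Φ₁` modulo `c²`. Approximating `ζ` to
precision `r` determines `u ζ` to precision `|c|² r` and hence `ζ` to precision `|c| r`, so `ζ` and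
`u` are limits of polynomials in the `λ_i / λ_0` with `Φ₁` inverted, and such limits define
functions on `𝒟₊`.
-/

namespace AHG

/-! ### Dwork's estimates -/

section ArtinHasse

open PowerSeries

variable {k : Type*} [Field k]

/-- The power series `exp (c t ^ s)`. -/
noncomputable def expMonomial (s : ℕ) (c : k) : k⟦X⟧ :=
  mk fun m => if s ∣ m then c ^ (m / s) / ((m / s).factorial : k) else 0

lemma coeff_expMonomial_mul {s : ℕ} (hs : s ≠ 0) (c : k) (m : ℕ) :
    coeff (s * m) (expMonomial s c) = c ^ m / (m.factorial : k) := by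
  rw [expMonomial, coeff_mk, if_pos (dvd_mul_right s m), Nat.mul_div_cancel_left m (by omega)]

lemma coeff_expMonomial_of_not_dvd {s m : ℕ} (h : ¬ s ∣ m) (c : k) :
    coeff m (expMonomial s c) = 0 := by
  rw [expMonomial, coeff_mk, if_neg h]

lemma constantCoeff_expMonomial (s : ℕ) (c : k) : constantCoeff (expMonomial s c) = 1 := by
  simp [← coeff_zero_eq_constantCoeff_apply, expMonomial]

/-- The truncated Artin–Hasse exponential `exp (∑ j ≤ m, t ^ (p ^ j) / p ^ j)`. -/
noncomputable def artinHasse (p : ℕ) (k : Type*) [Field k] (m : ℕ) : k⟦X⟧ :=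
  ∏ j ∈ Finset.range (m + 1), expMonomial (p ^ j) ((p : k) ^ j)⁻¹

lemma constantCoeff_artinHasse (p m : ℕ) : constantCoeff (artinHasse p k m) = 1 := by
  simp [artinHasse, map_prod, constantCoeff_expMonomial]

variable [CharZero k]

lemma expMonomial_eq_expand {s : ℕ} (hs : s ≠ 0) (c : k) :
    expMonomial s c = expand s hs (rescale c (exp k)) := by
  ext m
  simp only [expMonomial, coeff_mk, coeff_expand, coeff_rescale, coeff_exp, map_div₀, map_one,
    map_natCast, mul_one_div]

lemma expMonomial_mul {s : ℕ} (hs : s ≠ 0) (c d : k) :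
    expMonomial s c * expMonomial s d = expMonomial s (c + d) := by
  simp only [expMonomial_eq_expand hs, ← map_mul, exp_mul_exp_eq_exp_add]

lemma expMonomial_zero {s : ℕ} (hs : s ≠ 0) : expMonomial s (0 : k) = 1 := by
  simp [expMonomial_eq_expand hs]

lemma expMonomial_pow {s : ℕ} (hs : s ≠ 0) (c : k) (n : ℕ) :
    expMonomial s c ^ n = expMonomial s (n * c) := by
  induction n with
  | zero => simp [expMonomial_zero hs]
  | succ n ih => rw [pow_succ, ih, expMonomial_mul hs, Nat.cast_succ, add_one_mul]

lemma expand_expMonomial {p s : ℕ} (hp : p ≠ 0) (hs : s ≠ 0) (c : k) :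
    expand p hp (expMonomial s c) = expMonomial (p * s) c := by
  rw [expMonomial_eq_expand hs, expMonomial_eq_expand (mul_ne_zero hp hs), expand_mul]

lemma artinHasse_pow_mul {p : ℕ} (hp : p ≠ 0) (m : ℕ) :
    artinHasse p k m ^ p * expMonomial (p ^ (m + 1)) ((p : k) ^ m)⁻¹ =
      expMonomial 1 (p : k) * expand p hp (artinHasse p k m) := by
  have hpk : (p : k) ≠ 0 := Nat.cast_ne_zero.2 hp
  have expand_factor (j : ℕ) : expand p hp (expMonomial (p ^ j) ((p : k) ^ j)⁻¹) =
      expMonomial (p ^ (j + 1)) ((p : k) * ((p : k) ^ (j + 1))⁻¹) := by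
    rw [expand_expMonomial hp (pow_ne_zero j hp), ← pow_succ']
    congr 1
    rw [pow_succ']
    field_simp
  simp only [artinHasse, map_prod, ← Finset.prod_pow, expMonomial_pow (pow_ne_zero _ hp),
    expand_factor]
  rw [Finset.prod_range_succ', Finset.prod_range_succ]
  have last_factor : (p : k) * ((p : k) ^ (m + 1))⁻¹ = ((p : k) ^ m)⁻¹ := by
    rw [pow_succ']
    field_simp
  rw [last_factor, pow_zero, pow_zero, inv_one, mul_one]
  ring

end ArtinHasse

section DworkLemma

open PowerSeries

lemma coeff_pow_eq_coeff_trunc_pow_add {R : Type*} [CommRing R] {f : R⟦X⟧}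
    (hf : constantCoeff f = 1) {i : ℕ} (hi : i ≠ 0) (n : ℕ) :
    coeff i (f ^ n) = coeff i ((trunc i f : R⟦X⟧) ^ n) + n * coeff i f := by
  set g : R⟦X⟧ := (trunc i f : R⟦X⟧) with hg
  set h : R⟦X⟧ := mk fun j => coeff (j + i) f with hh
  have f_eq : f = g + X ^ i * h := by rw [add_comm]; exact eq_X_pow_mul_shift_add_trunc i f
  have constantCoeff_g : constantCoeff g = 1 := by
    rw [← coeff_zero_eq_constantCoeff_apply, hg, Polynomial.coeff_coe, coeff_trunc,
      if_pos (Nat.pos_of_ne_zero hi), coeff_zero_eq_constantCoeff_apply, hf]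
  obtain ⟨q, expansion⟩ := Polynomial.powAddExpansion g (X ^ i * h) n
  have pow_eq : f ^ n = g ^ n +
      X ^ i * ((n : R⟦X⟧) * g ^ (n - 1) * h + X * (X ^ (i - 1) * q * h ^ 2)) := by
    rw [f_eq, expansion, mul_add (X ^ i), ← mul_assoc X, ← mul_assoc X, ← pow_succ',
      Nat.sub_add_cancel (Nat.pos_of_ne_zero hi)]
    ring
  rw [pow_eq, map_add, coeff_X_pow_mul' _ i i, if_pos le_rfl, Nat.sub_self]
  simp [constantCoeff_g, hh]

lemma norm_coeff_mul_sub_le {K : Type*} [NormedField K] [IsUltrametricDist K] {g h : K⟦X⟧}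
    {c : ℝ} (hc : 0 ≤ c) (hg : constantCoeff g = 1) (hg' : ∀ j ≠ 0, ‖coeff j g‖ ≤ c) {i : ℕ}
    (hh : ∀ j ≤ i, ‖coeff j h‖ ≤ 1) : ‖coeff i (g * h) - coeff i h‖ ≤ c := by
  rw [coeff_mul, ← Finset.add_sum_erase _ _ (a := (0, i)) (by simp),
    coeff_zero_eq_constantCoeff_apply, hg, one_mul, add_sub_cancel_left]
  refine IsUltrametricDist.norm_sum_le_of_forall_le_of_nonneg hc fun ⟨l, j⟩ hlj => ?_
  simp only [Finset.mem_erase, ne_eq, Prod.mk.injEq,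
    Finset.HasAntidiagonal.mem_antidiagonal] at hlj
  calc ‖coeff l g * coeff j h‖ ≤ c * 1 :=
        norm_mul_le_of_le (hg' l (by omega)) (hh j (by omega))
    _ = c := mul_one c

variable {p : ℕ} [Fact p.Prime]

lemma natCast_dvd_coeff_expand_sub_coeff_pow (P : Polynomial ℤ_[p]) (i : ℕ) :
    (p : ℤ_[p]) ∣ (Polynomial.expand ℤ_[p] p P).coeff i - (P ^ p).coeff i := by
  rw [← Ideal.mem_span_singleton, ← PadicInt.maximalIdeal_eq_span_p, ← PadicInt.ker_toZMod,
    RingHom.mem_ker, map_sub, ← Polynomial.coeff_map, ← Polynomial.coeff_map,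
    Polynomial.map_expand, Polynomial.map_pow, ZMod.expand_card, sub_self]

lemma exists_map_eq_trunc {f : ℚ_[p]⟦X⟧} {i : ℕ} (hf : ∀ j < i, ‖coeff j f‖ ≤ 1) :
    ∃ P : Polynomial ℤ_[p], P.map PadicInt.Coe.ringHom = trunc i f := by
  rw [← Polynomial.mem_lifts, Polynomial.lifts_iff_coeff_lifts]
  intro j
  rw [coeff_trunc]
  split_ifs with hj
  · exact ⟨⟨coeff j f, hf j hj⟩, rfl⟩
  · exact ⟨0, map_zero _⟩

lemma norm_coeff_expand_sub_coeff_trunc_pow_le (hp : p ≠ 0) {f : ℚ_[p]⟦X⟧} {i : ℕ} (hi : i ≠ 0)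
    (hf : ∀ j < i, ‖coeff j f‖ ≤ 1) :
    ‖coeff i (expand p hp f) - coeff i ((trunc i f : ℚ_[p]⟦X⟧) ^ p)‖ ≤ ‖(p : ℚ_[p])‖ := by
  obtain ⟨P, hP⟩ := exists_map_eq_trunc hf
  obtain ⟨w, hw⟩ := natCast_dvd_coeff_expand_sub_coeff_pow P i
  have coeff_expand_f :
      coeff i (expand p hp f) = PadicInt.Coe.ringHom ((Polynomial.expand ℤ_[p] p P).coeff i) := by
    rw [← Polynomial.coeff_map, Polynomial.map_expand, hP, coeff_expand,
      Polynomial.coeff_expand (Nat.pos_of_ne_zero hp), coeff_trunc,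
      if_pos (Nat.div_lt_self (Nat.pos_of_ne_zero hi) (Fact.out : p.Prime).one_lt)]
  have coeff_trunc_pow :
      coeff i ((trunc i f : ℚ_[p]⟦X⟧) ^ p) = PadicInt.Coe.ringHom ((P ^ p).coeff i) := by
    rw [← Polynomial.coeff_map, Polynomial.map_pow, hP, ← Polynomial.coe_pow, Polynomial.coeff_coe]
  rw [coeff_expand_f, coeff_trunc_pow, ← map_sub, hw, map_mul, map_natCast]
  exact (norm_mul_le_of_le le_rfl w.2).trans_eq (mul_one _)

lemma norm_coeff_le_one_of_pow_eq_mul_expand (hp : p ≠ 0) {f g : ℚ_[p]⟦X⟧} {m : ℕ}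
    (hf : constantCoeff f = 1) (hg : constantCoeff g = 1)
    (hg' : ∀ j ≠ 0, ‖coeff j g‖ ≤ ‖(p : ℚ_[p])‖)
    (hfg : ∀ i < m, coeff i (f ^ p) = coeff i (g * expand p hp f)) {i : ℕ} (hi : i < m) :
    ‖coeff i f‖ ≤ 1 := by
  induction i using Nat.strong_induction_on with
  | _ i ih =>
  obtain rfl | hi0 := eq_or_ne i 0
  · simp [hf]
  have expand_le (j : ℕ) (hj : j ≤ i) : ‖coeff j (expand p hp f)‖ ≤ 1 := by
    rw [coeff_expand]
    split_ifs
    · have : j / p < i := by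
        rcases hj.eq_or_lt with rfl | hj
        · exact Nat.div_lt_self (Nat.pos_of_ne_zero hi0) (Fact.out : p.Prime).one_lt
        · exact (Nat.div_le_self j p).trans_lt hj
      exact ih _ this (this.trans hi)
    · simp
  have mul_coeff : (p : ℚ_[p]) * coeff i f =
      (coeff i (g * expand p hp f) - coeff i (expand p hp f)) +
        (coeff i (expand p hp f) - coeff i ((trunc i f : ℚ_[p]⟦X⟧) ^ p)) := by
    rw [← hfg i hi, coeff_pow_eq_coeff_trunc_pow_add hf hi0]
    ring
  have norm_mul_coeff : ‖(p : ℚ_[p])‖ * ‖coeff i f‖ ≤ ‖(p : ℚ_[p])‖ := by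
    rw [← norm_mul, mul_coeff]
    exact (IsUltrametricDist.norm_add_le_max _ _).trans <| max_le
      (norm_coeff_mul_sub_le (norm_nonneg _) hg hg' expand_le)
      (norm_coeff_expand_sub_coeff_trunc_pow_le hp hi0 fun j hj => ih j hj (hj.trans hi))
  exact le_of_mul_le_mul_left (by rwa [mul_one]) (norm_pos_iff.2 (Nat.cast_ne_zero.2 hp))

end DworkLemma

section DworkExponential

open PowerSeries

/-- A common denominator `p ^ (2 * ⌊i / p²⌋) * ⌊i / p²⌋!` for the coefficients of `t ^ i` in
`exp (t + t ^ p / p)` and in `exp (-t ^ (p ^ j) / p ^ j)`, `2 ≤ j`. -/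
def dworkDenom (p i : ℕ) : ℕ := p ^ (2 * (i / p ^ 2)) * (i / p ^ 2).factorial

lemma dworkDenom_mul_dvd (p i j : ℕ) :
    dworkDenom p i * dworkDenom p j ∣ dworkDenom p (i + j) := by
  have div_add_div_le : i / p ^ 2 + j / p ^ 2 ≤ (i + j) / p ^ 2 := Nat.div_add_div_le_add_div
  rw [dworkDenom, dworkDenom, mul_mul_mul_comm, ← pow_add, ← mul_add]
  exact mul_dvd_mul (pow_dvd_pow _ (Nat.mul_le_mul_left 2 div_add_div_le))
    ((Nat.factorial_mul_factorial_dvd_factorial_add _ _).trans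
      (Nat.factorial_dvd_factorial div_add_div_le))

lemma norm_natCast_mul_le_of_dvd {K : Type*} [NormedField K] [IsUltrametricDist K] {a b : ℕ}
    (hab : a ∣ b) (x : K) : ‖(b : K) * x‖ ≤ ‖(a : K) * x‖ := by
  obtain ⟨c, rfl⟩ := hab
  rw [Nat.cast_mul, mul_comm (a : K), mul_assoc, norm_mul]
  exact mul_le_of_le_one_left (norm_nonneg _) (IsUltrametricDist.norm_natCast_le_one K c)

lemma norm_dworkDenom_mul_mul_le {K : Type*} [NormedField K] [IsUltrametricDist K] (p : ℕ)
    {i j : ℕ} {x y : K} {c d : ℝ} (hx : ‖(dworkDenom p i : K) * x‖ ≤ c)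
    (hy : ‖(dworkDenom p j : K) * y‖ ≤ d) : ‖(dworkDenom p (i + j) : K) * (x * y)‖ ≤ c * d := by
  refine (norm_natCast_mul_le_of_dvd (dworkDenom_mul_dvd p i j) _).trans ?_
  rw [Nat.cast_mul, mul_mul_mul_comm]
  exact norm_mul_le_of_le hx hy

variable (p : ℕ) [Fact p.Prime]

/-- The power series over `ℚ_p` whose coefficients of degree `i < n` become integral when
multiplied by `dworkDenom p i`. -/
noncomputable def dworkIntegral (n : ℕ) : Submonoid ℚ_[p]⟦X⟧ where
  carrier := {g | ∀ i < n, ‖(dworkDenom p i : ℚ_[p]) * coeff i g‖ ≤ 1}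
  one_mem' i _ := by
    rw [norm_mul, coeff_one]
    refine mul_le_one₀ (IsUltrametricDist.norm_natCast_le_one _ _) (norm_nonneg _) ?_
    split_ifs <;> simp
  mul_mem' {f g} hf hg i hi := by
    rw [coeff_mul, Finset.mul_sum]
    refine IsUltrametricDist.norm_sum_le_of_forall_le_of_nonneg zero_le_one fun ⟨l, j⟩ hlj => ?_
    obtain rfl : l + j = i := Finset.HasAntidiagonal.mem_antidiagonal.1 hlj
    simpa only [mul_one] using norm_dworkDenom_mul_mul_le p (hf l (by omega)) (hg j (by omega))

lemma norm_pow_div_factorial_le {j : ℕ} (hj : j ≠ 0) :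
    ‖(p : ℚ_[p]) ^ j / (j.factorial : ℚ_[p])‖ ≤ ‖(p : ℚ_[p])‖ := by
  have val_lt : padicValNat p j.factorial < j := by
    have h := sub_one_mul_padicValNat_factorial_lt_of_ne_zero p hj
    have : 1 ≤ p - 1 := by have := (Fact.out : p.Prime).two_le; omega
    nlinarith
  have factorial_ne_zero : (j.factorial : ℚ_[p]) ≠ 0 := Nat.cast_ne_zero.2 j.factorial_ne_zero
  have norm_p_pow (m : ℕ) : ‖(p : ℚ_[p])‖ ^ m = (p : ℝ) ^ (-m : ℤ) := by
    rw [Padic.norm_p, inv_pow, zpow_neg, zpow_natCast]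
  rw [norm_div, norm_pow, Padic.norm_eq_zpow_neg_valuation factorial_ne_zero,
    Padic.valuation_natCast, norm_p_pow, ← pow_one ‖(p : ℚ_[p])‖, norm_p_pow,
    ← zpow_sub₀ (Nat.cast_ne_zero.2 (Fact.out : p.Prime).ne_zero)]
  exact zpow_le_zpow_right₀ (Nat.one_le_cast.2 (Fact.out : p.Prime).one_le) (by omega)

lemma norm_coeff_artinHasse_le_one {m i : ℕ} (hi : i < p ^ (m + 1)) :
    ‖coeff i (artinHasse p ℚ_[p] m)‖ ≤ 1 := by
  have hp : p ≠ 0 := (Fact.out : p.Prime).ne_zero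
  refine norm_coeff_le_one_of_pow_eq_mul_expand hp (constantCoeff_artinHasse p m)
    (constantCoeff_expMonomial 1 (p : ℚ_[p])) (fun j hj => ?_) (fun i hi => ?_) hi
  · rw [← one_mul j, coeff_expMonomial_mul one_ne_zero]
    exact norm_pow_div_factorial_le p hj
  · rw [← artinHasse_pow_mul hp, mul_comm, coeff_mul, ← Finset.add_sum_erase _ _ (a := (0, i))
      (by simp), coeff_zero_eq_constantCoeff_apply, constantCoeff_expMonomial, one_mul,
      left_eq_add]
    refine Finset.sum_eq_zero fun ⟨l, j⟩ hlj => ?_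
    simp only [Finset.mem_erase, ne_eq, Prod.mk.injEq,
      Finset.HasAntidiagonal.mem_antidiagonal] at hlj
    rw [coeff_expMonomial_of_not_dvd, zero_mul]
    exact fun hdvd => absurd (Nat.le_of_dvd (by omega) hdvd) (by omega)

lemma expMonomial_mem_dworkIntegral (n k : ℕ) :
    expMonomial (p ^ (k + 2)) (-((p : ℚ_[p]) ^ (k + 2))⁻¹) ∈ dworkIntegral p n := by
  intro i _
  by_cases hdvd : p ^ (k + 2) ∣ i
  · obtain ⟨m, rfl⟩ := hdvd
    have hp : 0 < p := (Fact.out : p.Prime).pos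
    have hpk : (p : ℚ_[p]) ≠ 0 := Nat.cast_ne_zero.2 hp.ne'
    have denom_dvd : p ^ ((k + 2) * m) * m.factorial ∣ dworkDenom p (p ^ (k + 2) * m) := by
      have two_pow_le : 2 ^ k ≤ p ^ k := Nat.pow_le_pow_left (Fact.out : p.Prime).two_le k
      have lt_two_pow : k < 2 ^ k := Nat.lt_two_pow_self
      rw [dworkDenom, pow_add p k 2, mul_right_comm, Nat.mul_div_cancel _ (pow_pos hp 2)]
      refine mul_dvd_mul (pow_dvd_pow _ ?_)
        (Nat.factorial_dvd_factorial (Nat.le_mul_of_pos_left _ (pow_pos hp k)))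
      rw [← mul_assoc]
      exact Nat.mul_le_mul_right m (by omega)
    refine (norm_natCast_mul_le_of_dvd denom_dvd _).trans ?_
    have factorial_ne_zero : (m.factorial : ℚ_[p]) ≠ 0 := Nat.cast_ne_zero.2 m.factorial_ne_zero
    have mul_coeff : ((p ^ ((k + 2) * m) * m.factorial : ℕ) : ℚ_[p]) *
        ((-((p : ℚ_[p]) ^ (k + 2))⁻¹) ^ m / m.factorial) = (-1) ^ m := by
      rw [neg_pow, inv_pow, ← pow_mul]
      push_cast
      field_simp
    rw [coeff_expMonomial_mul (pow_ne_zero _ hp.ne'), mul_coeff]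
    simp
  · rw [coeff_expMonomial_of_not_dvd hdvd]
    simp

/-- The series `exp (t + t ^ p / p)`; substituting `π t` for `t`, where `π ^ (p - 1) = -p`, gives
the Dwork series `exp (π (t - t ^ p))`. -/
noncomputable def dworkExp : ℚ_[p]⟦X⟧ := expMonomial 1 1 * expMonomial p (p : ℚ_[p])⁻¹

lemma dworkExp_eq_artinHasse_mul (m : ℕ) : dworkExp p = artinHasse p ℚ_[p] (m + 1) *
    ∏ j ∈ Finset.range m, expMonomial (p ^ (j + 2)) (-((p : ℚ_[p]) ^ (j + 2))⁻¹) := by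
  have cancel :
      (∏ j ∈ Finset.range m, expMonomial (p ^ (j + 1 + 1)) ((p : ℚ_[p]) ^ (j + 1 + 1))⁻¹) *
      ∏ j ∈ Finset.range m, expMonomial (p ^ (j + 2)) (-((p : ℚ_[p]) ^ (j + 2))⁻¹) = 1 := by
    rw [← Finset.prod_mul_distrib]
    refine Finset.prod_eq_one fun j _ => ?_
    have hp : p ^ (j + 2) ≠ 0 := pow_ne_zero _ (Fact.out : p.Prime).ne_zero
    rw [expMonomial_mul hp, add_neg_cancel, expMonomial_zero hp]
  rw [artinHasse, Finset.prod_range_succ', Finset.prod_range_succ', mul_right_comm,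
    mul_right_comm (Finset.prod _ _), cancel, one_mul, mul_comm, dworkExp]
  simp only [pow_zero, zero_add, pow_one, inv_one]

lemma norm_dworkDenom_mul_coeff_dworkExp_le_one (i : ℕ) :
    ‖(dworkDenom p i : ℚ_[p]) * coeff i (dworkExp p)‖ ≤ 1 := by
  suffices dworkExp p ∈ dworkIntegral p (p ^ (i + 1 + 1)) from
    this i ((Nat.lt_pow_self (Fact.out : p.Prime).one_lt).trans_le
      (Nat.pow_le_pow_right (Fact.out : p.Prime).pos (by omega)))
  rw [dworkExp_eq_artinHasse_mul p i]
  refine mul_mem (fun l hl => ?_) (prod_mem fun j _ => expMonomial_mem_dworkIntegral p _ j)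
  rw [norm_mul]
  exact mul_le_one₀ (IsUltrametricDist.norm_natCast_le_one _ _) (norm_nonneg _)
    (norm_coeff_artinHasse_le_one p hl)

lemma coeff_dworkExp (i : ℕ) : coeff i (dworkExp p) = ∑ k ∈ Finset.range (i + 1),
    if p * k ≤ i then 1 / ((p : ℚ_[p]) ^ k * (k.factorial * (i - p * k).factorial)) else 0 := by
  have hp : 0 < p := (Fact.out : p.Prime).pos
  rw [dworkExp, mul_comm, coeff_mul, Finset.Nat.sum_antidiagonal_eq_sum_range_succ_mk,
    ← Finset.sum_filter]
  have summand (k l : ℕ) : coeff (p * k) (expMonomial p (p : ℚ_[p])⁻¹) *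
      coeff l (expMonomial 1 (1 : ℚ_[p])) =
        1 / ((p : ℚ_[p]) ^ k * (k.factorial * l.factorial)) := by
    have := coeff_expMonomial_mul one_ne_zero (1 : ℚ_[p]) l
    rw [one_mul, one_pow] at this
    rw [coeff_expMonomial_mul hp.ne', this, inv_pow]
    ring
  simp_rw [← summand]
  symm
  refine Finset.sum_of_injOn (p * ·) (fun a _ b _ h => Nat.eq_of_mul_eq_mul_left hp h)
    (fun k hk => ?_) (fun j _ hj => ?_) fun k _ => rfl
  · simp only [Finset.coe_filter, Finset.mem_range, Set.mem_ofPred_eq] at hk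
    simp only [Finset.coe_range, Set.mem_Iio]
    omega
  · rw [coeff_expMonomial_of_not_dvd, zero_mul]
    rintro ⟨k, rfl⟩
    have : k ≤ p * k := Nat.le_mul_of_pos_left k hp
    refine hj ⟨k, ?_, rfl⟩
    simp only [Finset.coe_filter, Finset.mem_range, Set.mem_ofPred_eq] at *
    omega

end DworkExponential

section DworkCoefficients

lemma dworkB_of_lt {p : ℕ} {K : Type*} [Field K] (π : K) {i : ℕ} (hi : i < p) :
    dworkB p π i = π ^ i / (i.factorial : K) := by
  rw [dworkB, Finset.sum_eq_single 0 (fun k _ hk => if_neg ?_) (by simp)]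
  · simp
  · have : p ≤ p * k := Nat.le_mul_of_pos_right p (Nat.pos_of_ne_zero hk)
    omega

variable (p : ℕ) [Fact p.Prime] {K : Type*} [NormedField K] [NormedAlgebra ℚ_[p] K]

lemma norm_natCast_eq_padicNorm (m : ℕ) : ‖(m : K)‖ = ‖(m : ℚ_[p])‖ := by
  rw [← map_natCast (algebraMap ℚ_[p] K), norm_algebraMap']

lemma norm_natCast_prime : ‖(p : K)‖ = (p : ℝ)⁻¹ := by
  rw [norm_natCast_eq_padicNorm p, Padic.norm_p]

lemma charZero_of_normedAlgebra_padic (K : Type*) [NormedField K] [NormedAlgebra ℚ_[p] K] :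
    CharZero K :=
  charZero_of_injective_algebraMap (algebraMap ℚ_[p] K).injective

lemma norm_factorial_pred_prime : ‖((p - 1).factorial : K)‖ = 1 := by
  have hp : p.Prime := Fact.out
  rw [norm_natCast_eq_padicNorm p, Padic.norm_natCast_eq_one_iff]
  rw [hp.coprime_iff_not_dvd, hp.dvd_factorial]
  have := hp.pos
  omega

lemma norm_dworkDenom (m : ℕ) :
    ‖(dworkDenom p m : K)‖ = (p : ℝ)⁻¹ ^ padicValNat p (dworkDenom p m) := by
  have denom_ne_zero : (dworkDenom p m : ℚ_[p]) ≠ 0 := Nat.cast_ne_zero.2 <|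
    mul_ne_zero (pow_ne_zero _ (Fact.out : p.Prime).ne_zero) (Nat.factorial_ne_zero _)
  rw [norm_natCast_eq_padicNorm p, Padic.norm_eq_zpow_neg_valuation denom_ne_zero,
    Padic.valuation_natCast, zpow_neg, zpow_natCast, inv_pow]

variable {p} {π : K}

lemma ne_zero_of_pow_eq_neg_prime (hπ : π ^ (p - 1) = -(p : K)) : π ≠ 0 := by
  have := charZero_of_normedAlgebra_padic p K
  rintro rfl
  rw [zero_pow (Nat.sub_ne_zero_of_lt (Fact.out : p.Prime).one_lt), zero_eq_neg] at hπ
  exact (Fact.out : p.Prime).ne_zero (Nat.cast_eq_zero.1 hπ)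

lemma norm_pow_of_pow_eq_neg_prime (hπ : π ^ (p - 1) = -(p : K)) :
    ‖π‖ ^ (p - 1) = (p : ℝ)⁻¹ := by
  rw [← norm_pow, hπ, norm_neg, norm_natCast_prime]

lemma dworkB_eq_pow_mul_coeff (hπ : π ^ (p - 1) = -(p : K)) (i : ℕ) :
    dworkB p π i = π ^ i * algebraMap ℚ_[p] K (PowerSeries.coeff i (dworkExp p)) := by
  have := charZero_of_normedAlgebra_padic p K
  have hp : (p : K) ≠ 0 := Nat.cast_ne_zero.2 (Fact.out : p.Prime).ne_zero
  rw [coeff_dworkExp, map_sum, Finset.mul_sum, dworkB]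
  refine Finset.sum_congr rfl fun k _ => ?_
  split_ifs with hk
  · have pow_i : π ^ i = π ^ (i - p * k + k) * (-(p : K)) ^ k := by
      rw [← hπ, ← pow_mul, ← pow_add, Nat.sub_mul, one_mul]
      congr 1
      have : k ≤ p * k := Nat.le_mul_of_pos_left k (Fact.out : p.Prime).pos
      omega
    have hk : (k.factorial : K) ≠ 0 := Nat.cast_ne_zero.2 k.factorial_ne_zero
    have hik : ((i - p * k).factorial : K) ≠ 0 := Nat.cast_ne_zero.2 (Nat.factorial_ne_zero _)
    simp only [pow_i, map_div₀, map_mul, map_pow, map_natCast, map_one, neg_pow (p : K) k]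
    field_simp
  · simp

lemma norm_dworkDenom_mul_dworkB_le (hπ : π ^ (p - 1) = -(p : K)) (i : ℕ) :
    ‖(dworkDenom p i : K) * dworkB p π i‖ ≤ ‖π‖ ^ i := by
  rw [dworkB_eq_pow_mul_coeff hπ, mul_left_comm, ← map_natCast (algebraMap ℚ_[p] K), ← map_mul,
    norm_mul, norm_algebraMap', norm_pow]
  exact mul_le_of_le_one_right (by positivity) (norm_dworkDenom_mul_coeff_dworkExp_le_one p i)

lemma norm_dworkDenom_mul_prod_dworkB_le [IsUltrametricDist K] (hπ : π ^ (p - 1) = -(p : K))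
    {α : Type*} (s : Finset α) (ν : α → ℕ) :
    ‖(dworkDenom p (∑ j ∈ s, ν j) : K) * ∏ j ∈ s, dworkB p π (ν j)‖ ≤ ‖π‖ ^ ∑ j ∈ s, ν j := by
  induction s using Finset.induction_on with
  | empty => simp [dworkDenom]
  | insert i s hi ih =>
    rw [Finset.sum_insert hi, Finset.prod_insert hi, pow_add]
    exact norm_dworkDenom_mul_mul_le p (norm_dworkDenom_mul_dworkB_le hπ _) ih

lemma padicValNat_dworkDenom_add_two_le (hp2 : p ≠ 2) {m k : ℕ} (hk : 2 ≤ k) (hm : m < p * k) :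
    padicValNat p (dworkDenom p m) + 2 ≤ k := by
  have hp : p.Prime := Fact.out
  have three_le : 3 ≤ p := by have := hp.two_le; omega
  rw [dworkDenom, padicValNat.mul (pow_ne_zero _ hp.ne_zero) (Nat.factorial_ne_zero _),
    padicValNat.prime_pow]
  set q := m / p ^ 2
  obtain hq | hq := Nat.eq_zero_or_pos q
  · simpa [hq] using hk
  · have val_factorial_lt : padicValNat p q.factorial < q := by
      have h := sub_one_mul_padicValNat_factorial_lt_of_ne_zero p hq.ne'
      have : 1 ≤ p - 1 := by omega
      nlinarith
    have mul_lt : q * p < k := by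
      have : q * p ^ 2 ≤ m := Nat.div_mul_le_self m (p ^ 2)
      exact Nat.lt_of_mul_lt_mul_left (a := p) (by nlinarith)
    nlinarith

lemma norm_zpow_mul_le_of_norm_dworkDenom_mul_le (hp2 : p ≠ 2) (hπ : π ^ (p - 1) = -(p : K))
    {k r : ℤ} {m : ℕ} (hm : (m : ℤ) = p * k - r) (hk : 2 ≤ k) (hr : 1 ≤ r) {x : K}
    (hx : ‖(dworkDenom p m : K) * x‖ ≤ ‖π‖ ^ m) :
    ‖π ^ (r - k) * x‖ ≤ ((p : ℝ)⁻¹) ^ 2 := by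
  lift k to ℕ using by omega
  have hp : p.Prime := Fact.out
  have inv_p_pos : 0 < (p : ℝ)⁻¹ := inv_pos.2 (Nat.cast_pos.2 hp.pos)
  have inv_p_le_one : (p : ℝ)⁻¹ ≤ 1 := inv_le_one_of_one_le₀ (Nat.one_le_cast.2 hp.one_le)
  have val_le := padicValNat_dworkDenom_add_two_le hp2 (k := k) (by omega) (m := m) (by zify; omega)
  have norm_π_ne_zero : ‖π‖ ≠ 0 := norm_ne_zero_iff.2 (ne_zero_of_pow_eq_neg_prime hπ)
  have norm_π_pow : ‖π‖ ^ (r - (k : ℤ)) * ‖π‖ ^ m = ((p : ℝ)⁻¹) ^ k := by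
    rw [← norm_pow_of_pow_eq_neg_prime hπ, ← pow_mul, ← zpow_natCast, ← zpow_natCast,
      ← zpow_add₀ norm_π_ne_zero, hm]
    congr 1
    push_cast [hp.one_le]
    ring
  rw [norm_mul, norm_dworkDenom p] at hx
  rw [norm_mul, norm_zpow]
  set v := padicValNat p (dworkDenom p m)
  refine le_of_mul_le_mul_left ?_ (pow_pos inv_p_pos v)
  calc (p : ℝ)⁻¹ ^ v * (‖π‖ ^ (r - (k : ℤ)) * ‖x‖)
      = ‖π‖ ^ (r - (k : ℤ)) * ((p : ℝ)⁻¹ ^ v * ‖x‖) := by ring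
    _ ≤ ‖π‖ ^ (r - (k : ℤ)) * ‖π‖ ^ m := by gcongr
    _ = (p : ℝ)⁻¹ ^ k := norm_π_pow
    _ ≤ (p : ℝ)⁻¹ ^ (v + 2) := pow_le_pow_of_le_one inv_p_pos.le inv_p_le_one val_le
    _ = (p : ℝ)⁻¹ ^ v * (p : ℝ)⁻¹ ^ 2 := pow_add _ _ _

end DworkCoefficients

/-! ### Interior lattice points -/

section Cone

variable {n N : ℕ} (a : Fin (N + 1) → Fin n → ℤ)

lemma hat_mem_cone (j : Fin (N + 1)) : (fun i => (hat (a j) i : ℝ)) ∈ cone a := by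
  refine ⟨Pi.single j 1, fun i => by rw [Pi.single_apply]; split_ifs <;> simp, ?_⟩
  rw [Finset.sum_eq_single j (fun i _ hi => by simp [Pi.single_eq_of_ne hi]) (by simp)]
  simp

lemma hat_mem_latticeM (j : Fin (N + 1)) : hat (a j) ∈ latticeM a :=
  ⟨hat_mem_cone a j, AddSubgroup.subset_closure ⟨j, rfl⟩⟩

variable {a}

lemma nsmul_mem_latticeM {μ : Fin (n + 1) → ℤ} (hμ : μ ∈ latticeM a) (k : ℕ) :
    k • μ ∈ latticeM a := by
  obtain ⟨⟨t, ht, eq_sum⟩, hmem⟩ := hμ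
  refine ⟨⟨k • t, fun j => smul_nonneg k.zero_le (ht j), ?_⟩, nsmul_mem hmem k⟩
  calc (fun i => ((k • μ) i : ℝ)) = k • fun i => (μ i : ℝ) := by
        ext i
        simp
    _ = ∑ j, (k • t) j • fun i => (hat (a j) i : ℝ) := by
        simp only [eq_sum, Finset.smul_sum, Pi.smul_apply, smul_assoc]

lemma nonneg_of_mem_cone {ℓ : (Fin (n + 1) → ℝ) →ₗ[ℝ] ℝ}
    (hℓ : ∀ j, 0 ≤ ℓ (fun i => (hat (a j) i : ℝ))) {x : Fin (n + 1) → ℝ} (hx : x ∈ cone a) :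
    0 ≤ ℓ x := by
  obtain ⟨t, ht, rfl⟩ := hx
  rw [map_sum]
  refine Finset.sum_nonneg fun j _ => ?_
  rw [map_smul]
  exact mul_nonneg (ht j) (hℓ j)

lemma one_le_zero_of_mem_latticeMint {ν : Fin (n + 1) → ℤ} (hν : ν ∈ latticeMint a) :
    1 ≤ ν 0 := by
  have proj_nonneg := fun x => nonneg_of_mem_cone (a := a) (ℓ := LinearMap.proj 0) (x := x)
    (fun j => by simp [hat])
  have zero_le : (0 : ℝ) ≤ ν 0 := proj_nonneg _ hν.1.1
  have ne_zero : ν 0 ≠ 0 := fun h => by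
    simpa [hat] using hν.2 (LinearMap.proj 0) proj_nonneg (by simp [h]) _ (hat_mem_cone a 0)
  have : 0 ≤ ν 0 := by exact_mod_cast zero_le
  omega

lemma exists_forall_le_and_forall_interior_lt {E : Type*} [TopologicalSpace E] [AddCommGroup E]
    [Module ℝ E] [IsTopologicalAddGroup E] [ContinuousSMul ℝ E] {D : Set E} (hD : Convex ℝ D)
    (hne : (interior D).Nonempty) {x : E} (hx : x ∉ interior D) :
    ∃ f : StrongDual ℝ E, (∀ y ∈ D, f y ≤ f x) ∧ ∀ y ∈ interior D, f y < f x := by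
  obtain ⟨f, hf, hle⟩ := geometric_hahn_banach_of_nonempty_interior_point hD hx hne
  have image_subset : f '' interior D ⊆ interior (Set.Iic (f x)) :=
    interior_maximal (Set.image_subset_iff.2 fun y hy => hle y (interior_subset hy))
      (f.isOpenMap_of_ne_zero hf _ isOpen_interior)
  rw [interior_Iic] at image_subset
  exact ⟨f, hle, fun y hy => image_subset ⟨y, hy, rfl⟩⟩

lemma tail_mem_interior_convexHull {ν : Fin (n + 1) → ℤ} (hν : ν ∈ latticeMint a) (hν0 : ν 0 = 1)
    (h0 : (fun i => (a 0 i : ℝ)) ∈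
      interior (convexHull ℝ (Set.range fun j : Fin N => fun i => (a j.succ i : ℝ)))) :
    (fun i => (Fin.tail ν i : ℝ)) ∈
      interior (convexHull ℝ (Set.range fun j : Fin N => fun i => (a j.succ i : ℝ))) := by
  by_contra hnotin
  obtain ⟨f, f_le, f_lt⟩ :=
    exists_forall_le_and_forall_interior_lt (convex_convexHull ℝ _) ⟨_, h0⟩ hnotin
  set v : Fin n → ℝ := fun i => (Fin.tail ν i : ℝ)
  let ℓ : (Fin (n + 1) → ℝ) →ₗ[ℝ] ℝ :=
    f v • LinearMap.proj 0 - f.toLinearMap ∘ₗ LinearMap.funLeft ℝ ℝ Fin.succ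
  have ℓ_hat (j : Fin (N + 1)) :
      ℓ (fun i => (hat (a j) i : ℝ)) = f v - f (fun i => (a j i : ℝ)) := by
    simp [ℓ, hat, LinearMap.funLeft, Function.comp_def]
  have ℓ_ν : ℓ (fun i => (ν i : ℝ)) = 0 := by
    simp [ℓ, hν0, v, Fin.tail, LinearMap.funLeft, Function.comp_def]
  have ℓ_nonneg (j : Fin (N + 1)) : 0 ≤ ℓ (fun i => (hat (a j) i : ℝ)) := by
    rw [ℓ_hat, sub_nonneg]
    cases j using Fin.cases with
    | zero => exact (f_lt _ h0).le
    | succ j => exact f_le _ (subset_convexHull ℝ _ ⟨j, rfl⟩)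
  have ℓ_hat_zero := hν.2 ℓ (fun x => nonneg_of_mem_cone ℓ_nonneg) ℓ_ν _ (hat_mem_cone a 0)
  rw [ℓ_hat, sub_eq_zero] at ℓ_hat_zero
  exact (f_lt _ h0).ne' ℓ_hat_zero

lemma eq_hat_of_mem_latticeMint (hΔ : uniqueInteriorPoint a) {ν : Fin (n + 1) → ℤ}
    (hν : ν ∈ latticeMint a) (hν0 : ν 0 = 1) : ν = hat (a 0) := by
  rw [← Fin.cons_self_tail ν, hν0, hat, hΔ.2 _ (tail_mem_interior_convexHull hν hν0 hΔ.1)]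

end Cone

/-! ### Power series with bounded coefficients -/

section CoeffNorm

open MvPowerSeries

variable {σ K : Type*} [NormedField K]

/-- All coefficients of `f` have norm at most `c`; this is how we speak of the supremum norm of a
power series with bounded coefficients. -/
def CoeffNormLE (f : MvPowerSeries σ K) (c : ℝ) : Prop := ∀ ν, ‖coeff ν f‖ ≤ c

namespace CoeffNormLE

variable {f g : MvPowerSeries σ K} {c d : ℝ}

lemma nonneg (hf : CoeffNormLE f c) : 0 ≤ c := (norm_nonneg _).trans (hf 0)

lemma mono (hf : CoeffNormLE f c) (hcd : c ≤ d) : CoeffNormLE f d := fun ν => (hf ν).trans hcd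

lemma neg (hf : CoeffNormLE f c) : CoeffNormLE (-f) c := fun ν => by
  rw [map_neg, norm_neg]
  exact hf ν

lemma smul (x : K) (hf : CoeffNormLE f c) : CoeffNormLE (x • f) (‖x‖ * c) := fun ν => by
  rw [coeff_smul, norm_mul]
  exact mul_le_mul_of_nonneg_left (hf ν) (norm_nonneg x)

lemma zero (hc : 0 ≤ c) : CoeffNormLE (0 : MvPowerSeries σ K) c := fun ν => by
  rwa [map_zero, norm_zero]

lemma one : CoeffNormLE (1 : MvPowerSeries σ K) 1 := fun ν => by
  rw [coeff_one]
  split_ifs <;> simp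

lemma expand {p : ℕ} (hp : p ≠ 0) (hf : CoeffNormLE f c) :
    CoeffNormLE (MvPowerSeries.expand p hp f) c := fun ν => by
  by_cases hν : ∀ i, p ∣ ν i
  · obtain ⟨μ, rfl⟩ : ∃ μ, ν = p • μ :=
      ⟨ν.mapRange (· / p) (Nat.zero_div p), by ext i; simp [Nat.mul_div_cancel' (hν i)]⟩
    rw [coeff_expand_smul]
    exact hf μ
  · push Not at hν
    obtain ⟨i, hi⟩ := hν
    rw [coeff_expand_of_not_dvd p hp f hi, norm_zero]
    exact hf.nonneg

variable [IsUltrametricDist K]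

lemma add (hf : CoeffNormLE f c) (hg : CoeffNormLE g c) : CoeffNormLE (f + g) c := fun ν => by
  rw [map_add]
  exact (IsUltrametricDist.norm_add_le_max _ _).trans (max_le (hf ν) (hg ν))

lemma sub (hf : CoeffNormLE f c) (hg : CoeffNormLE g c) : CoeffNormLE (f - g) c := by
  rw [sub_eq_add_neg]
  exact hf.add hg.neg

lemma sub_trans {h : MvPowerSeries σ K} (hfg : CoeffNormLE (f - g) c)
    (hgh : CoeffNormLE (g - h) c) : CoeffNormLE (f - h) c := by
  rw [← sub_add_sub_cancel f g h]
  exact hfg.add hgh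

lemma sum {α : Type*} {s : Finset α} {F : α → MvPowerSeries σ K} (hc : 0 ≤ c)
    (hF : ∀ i ∈ s, CoeffNormLE (F i) c) : CoeffNormLE (∑ i ∈ s, F i) c := fun ν => by
  rw [map_sum]
  exact IsUltrametricDist.norm_sum_le_of_forall_le_of_nonneg hc fun i hi => hF i hi ν

lemma mul (hf : CoeffNormLE f c) (hg : CoeffNormLE g d) : CoeffNormLE (f * g) (c * d) :=
  fun ν => by
  rw [coeff_mul]
  exact IsUltrametricDist.norm_sum_le_of_forall_le_of_nonneg (mul_nonneg hf.nonneg hg.nonneg)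
    fun x _ => norm_mul_le_of_le (hf x.1) (hg x.2)

lemma pow (hf : CoeffNormLE f c) (k : ℕ) : CoeffNormLE (f ^ k) (c ^ k) := by
  induction k with
  | zero => simpa using one
  | succ k ih => simpa only [pow_succ] using ih.mul hf

lemma pow_of_one (hf : CoeffNormLE f 1) (k : ℕ) : CoeffNormLE (f ^ k) 1 := by
  simpa using hf.pow k

lemma exists_map_eq (hf : CoeffNormLE f 1) :
    ∃ F : MvPowerSeries σ (NormedField.valuation (K := K)).integer,
      map (NormedField.valuation (K := K)).integer.subtype F = f :=
  ⟨fun ν => ⟨coeff ν f, hf ν⟩, MvPowerSeries.ext fun _ => rfl⟩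

lemma inv (hf : CoeffNormLE f 1) (hf0 : ‖constantCoeff f‖ = 1) : CoeffNormLE f⁻¹ 1 := by
  obtain ⟨F, rfl⟩ := hf.exists_map_eq
  rw [constantCoeff_map] at hf0
  have isUnit_F : IsUnit F := isUnit_iff_constantCoeff.2 <|
    (Valuation.integer.integers _).isUnit_of_one' (NNReal.eq hf0)
  obtain ⟨G, hFG⟩ := isUnit_F.exists_right_inv
  have inv_eq : (map (NormedField.valuation (K := K)).integer.subtype F)⁻¹ =
      map (NormedField.valuation (K := K)).integer.subtype G := by
    have hf0_ne : ‖constantCoeff (map (NormedField.valuation (K := K)).integer.subtype F)‖ ≠ 0 := by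
      rw [constantCoeff_map, hf0]
      exact one_ne_zero
    rw [MvPowerSeries.inv_eq_iff_mul_eq_one (norm_ne_zero_iff.1 hf0_ne), ← map_mul, mul_comm, hFG,
      map_one]
  rw [inv_eq]
  exact fun ν => (coeff ν G).2

lemma norm_constantCoeff_eq_one (hf : CoeffNormLE (1 - f) c) (hc : c < 1) :
    ‖constantCoeff f‖ = 1 := by
  have norm_lt : ‖1 - constantCoeff f‖ < 1 := by simpa using (hf 0).trans_lt hc
  by_contra hne
  have norm_eq_max := IsUltrametricDist.norm_add_eq_max_of_norm_ne_norm
    (x := 1) (y := -constantCoeff f) (by rwa [norm_neg, norm_one, ne_comm])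
  rw [← sub_eq_add_neg, norm_one] at norm_eq_max
  exact (norm_eq_max.symm.trans_lt norm_lt).not_ge (le_max_left _ _)

end CoeffNormLE

end CoeffNorm

section GaussNorm

open MvPowerSeries Filter

variable {σ K : Type*} [NormedField K]

/-- The size of the term of `f` of exponent `ν` on the polydisc of radius `r`. -/
noncomputable def termWeight (f : MvPowerSeries σ K) (r : ℝ) (ν : σ →₀ ℕ) : ℝ :=
  ‖coeff ν f‖ * r ^ ν.degree

lemma termWeight_mul_termWeight (f g : MvPowerSeries σ K) (r : ℝ) (μ ν : σ →₀ ℕ) :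
    termWeight f r μ * termWeight g r ν = ‖coeff μ f * coeff ν g‖ * r ^ (μ + ν).degree := by
  rw [termWeight, termWeight, norm_mul, map_add, pow_add]
  ring

/-- The lexicographically smallest exponent at which `f` attains its Gauss norm of radius `r`. -/
structure IsLeadingExponent [LinearOrder σ] (f : MvPowerSeries σ K) (r : ℝ) (α : σ →₀ ℕ) :
    Prop where
  pos : 0 < termWeight f r α
  le : ∀ ν, termWeight f r ν ≤ termWeight f r α
  lt : ∀ ν, toLex ν < toLex α → termWeight f r ν < termWeight f r α

variable {f g : MvPowerSeries σ K} {c d r : ℝ}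

lemma CoeffNormLE.finite_le_termWeight [Finite σ] (hf : CoeffNormLE f c) (hr : 0 < r)
    (hr1 : r < 1) {ε : ℝ} (hε : 0 < ε) : {ν | ε ≤ termWeight f r ν}.Finite := by
  have hc := hf.nonneg
  obtain ⟨m, hm⟩ := exists_pow_lt_of_lt_one (div_pos hε (by linarith : 0 < c + 1)) hr1
  refine (Finsupp.finite_of_degree_le (σ := σ) m).subset fun ν hν => ?_
  simp only [Set.mem_ofPred_eq] at hν ⊢
  by_contra! m_lt
  refine hν.not_gt ?_
  calc termWeight f r ν ≤ (c + 1) * r ^ m :=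
        mul_le_mul ((hf ν).trans (by linarith)) (pow_le_pow_of_le_one hr.le hr1.le m_lt.le)
          (by positivity) (by positivity)
    _ < ε := by rwa [lt_div_iff₀' (by linarith)] at hm

lemma CoeffNormLE.exists_isLeadingExponent [LinearOrder σ] [Finite σ] (hf : CoeffNormLE f c)
    (hf0 : f ≠ 0) (hr : 0 < r) (hr1 : r < 1) : ∃ α, IsLeadingExponent f r α := by
  obtain ⟨ν₀, hν₀⟩ : ∃ ν, coeff ν f ≠ 0 := by
    by_contra! h
    exact hf0 (MvPowerSeries.ext h)
  have weight_pos : 0 < termWeight f r ν₀ := mul_pos (norm_pos_iff.2 hν₀) (pow_pos hr _)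
  obtain ⟨α, hα, hmax⟩ := Set.exists_max_image _
    (fun ν => toLex (termWeight f r ν, OrderDual.toDual (toLex ν)))
    (hf.finite_le_termWeight hr hr1 weight_pos) ⟨ν₀, le_refl (termWeight f r ν₀)⟩
  have lt_or (ν : σ →₀ ℕ) : termWeight f r ν < termWeight f r α ∨
      termWeight f r ν = termWeight f r α ∧ toLex α ≤ toLex ν := by
    by_cases hν : termWeight f r ν₀ ≤ termWeight f r ν
    · simpa only [Prod.Lex.toLex_le_toLex, OrderDual.toDual_le_toDual] using hmax ν hν
    · exact Or.inl ((not_le.1 hν).trans_le hα)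
  refine ⟨α, weight_pos.trans_le hα, fun ν => ?_, fun ν hlt => ?_⟩
  · exact (lt_or ν).elim le_of_lt fun h => h.1.le
  · exact (lt_or ν).resolve_right fun h => h.2.not_gt hlt

lemma IsLeadingExponent.termWeight_mul_lt [LinearOrder σ] {α β μ ν : σ →₀ ℕ}
    (hα : IsLeadingExponent f r α) (hβ : IsLeadingExponent g r β) (hr : 0 ≤ r)
    (hadd : μ + ν = α + β) (hne : (μ, ν) ≠ (α, β)) :
    termWeight f r μ * termWeight g r ν < termWeight f r α * termWeight g r β := by
  have weight_nonneg (h : MvPowerSeries σ K) (ν : σ →₀ ℕ) : 0 ≤ termWeight h r ν :=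
    mul_nonneg (norm_nonneg _) (pow_nonneg hr _)
  obtain hlt | heq | hgt := lt_trichotomy (toLex μ) (toLex α)
  · exact mul_lt_mul_of_lt_of_le_of_nonneg_of_pos (hα.lt _ hlt) (hβ.le _) (weight_nonneg f μ) hβ.pos
  · obtain rfl : μ = α := toLex.injective heq
    exact absurd (by rw [add_left_cancel hadd]) hne
  · have hlt : toLex ν < toLex β := by
      by_contra! hle
      have := add_lt_add_of_lt_of_le hgt hle
      rw [← toLex_add, ← toLex_add, hadd] at this
      exact this.false
    exact mul_lt_mul_of_le_of_lt_of_nonneg_of_pos (hα.le _) (hβ.lt _ hlt) (weight_nonneg g ν) hα.pos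

lemma IsLeadingExponent.coeff_add_mul_ne_zero [IsUltrametricDist K] [LinearOrder σ]
    {α β : σ →₀ ℕ} (hα : IsLeadingExponent f r α)
    (hβ : IsLeadingExponent g r β) (hr : 0 ≤ r) : coeff (α + β) (f * g) ≠ 0 := by
  have mul_pos := mul_pos hα.pos hβ.pos
  have norm_coeff_add_mul : ‖coeff (α + β) (f * g)‖ = ‖coeff α f * coeff β g‖ := by
    refine antidiagonal_dominant (fun x : K => ‖x‖) f g α β IsUltrametricDist.norm_add_le_max
      norm_mul (fun x => (norm_neg x).symm) fun x hx hne => ?_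
    rw [Finset.HasAntidiagonal.mem_antidiagonal] at hx
    have := hα.termWeight_mul_lt hβ hr hx hne
    rw [termWeight_mul_termWeight, termWeight_mul_termWeight, hx] at this
    rw [← norm_mul]
    exact lt_of_mul_lt_mul_right this (pow_nonneg hr _)
  rw [← norm_ne_zero_iff, norm_coeff_add_mul]
  rw [termWeight_mul_termWeight] at mul_pos
  exact (pos_of_mul_pos_left mul_pos (pow_nonneg hr _)).ne'

/- At every radius `r < 1` the Gauss norms of `f` and `g` are attained, and the product of the two
leading terms survives in `f * g = 1`; hence both leading exponents vanish. Then let `r → 1`. -/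
lemma CoeffNormLE.of_mul_eq_one [IsUltrametricDist K] [Finite σ] (hf : CoeffNormLE f c)
    (hg : CoeffNormLE g d) (hfg : f * g = 1) : CoeffNormLE f ‖constantCoeff f‖ := by
  let := linearOrderOfSTO (WellOrderingRel (α := σ))
  intro ν
  have weight_le (r : ℝ) (hr : r ∈ Set.Ioo 0 1) : termWeight f r ν ≤ ‖constantCoeff f‖ := by
    obtain ⟨α, hα⟩ := hf.exists_isLeadingExponent (left_ne_zero_of_mul_eq_one hfg) hr.1 hr.2
    obtain ⟨β, hβ⟩ := hg.exists_isLeadingExponent (right_ne_zero_of_mul_eq_one hfg) hr.1 hr.2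
    have coeff_ne_zero := hα.coeff_add_mul_ne_zero hβ hr.1.le
    rw [hfg, coeff_one, ne_eq, ite_eq_right_iff, not_forall] at coeff_ne_zero
    obtain ⟨rfl, rfl⟩ := add_eq_zero.1 coeff_ne_zero.choose
    simpa [termWeight] using hα.le ν
  have tendsto_weight : Tendsto (fun r => termWeight f r ν) (nhdsWithin 1 (Set.Ioo 0 1))
      (nhds ‖coeff ν f‖) := by
    refine Tendsto.mono_left ?_ nhdsWithin_le_nhds
    have := (by fun_prop : Continuous fun r : ℝ => ‖coeff ν f‖ * r ^ ν.degree).tendsto 1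
    rwa [one_pow, mul_one] at this
  have : (nhdsWithin (1 : ℝ) (Set.Ioo 0 1)).NeBot := right_nhdsWithin_Ioo_neBot one_pos
  exact le_of_tendsto tendsto_weight (eventually_mem_nhdsWithin.mono weight_le)

end GaussNorm

section UniformClosure

open MvPowerSeries

variable {σ K : Type*} [NormedField K] [IsUltrametricDist K]

/-- The algebra of power series with bounded coefficients. -/
def boundedSeries (σ K : Type*) [NormedField K] [IsUltrametricDist K] :
    Subalgebra K (MvPowerSeries σ K) where
  carrier := {f | ∃ c, CoeffNormLE f c}
  mul_mem' := fun ⟨_, hf⟩ ⟨_, hg⟩ => ⟨_, hf.mul hg⟩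
  add_mem' := fun ⟨_, hf⟩ ⟨_, hg⟩ =>
    ⟨_, (hf.mono (le_max_left _ _)).add (hg.mono (le_max_right _ _))⟩
  algebraMap_mem' := fun x => ⟨_, by
    rw [Algebra.algebraMap_eq_smul_one]
    exact CoeffNormLE.one.smul x⟩

variable {A : Subalgebra K (MvPowerSeries σ K)} {f g : MvPowerSeries σ K}

/-- The closure of the bounded elements of `A` under uniform convergence of coefficients. -/
def uniformClosure (A : Subalgebra K (MvPowerSeries σ K)) :
    Subalgebra K (MvPowerSeries σ K) where
  carrier := {f | ∀ ε > 0, ∃ g ∈ A ⊓ boundedSeries σ K, CoeffNormLE (f - g) ε}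
  mul_mem' := fun {f₁ f₂} h₁ h₂ ε hε => by
    obtain ⟨g₁, hg₁, hfg₁⟩ := h₁ 1 one_pos
    obtain ⟨c₁, hc₁⟩ : f₁ ∈ boundedSeries σ K := by
      simpa using (boundedSeries σ K).add_mem ⟨_, hfg₁⟩ hg₁.2
    have c₁_nonneg := hc₁.nonneg
    obtain ⟨g₂, hg₂, hfg₂⟩ := h₂ (ε / (c₁ + 1)) (by positivity)
    obtain ⟨c₂, hc₂⟩ := hg₂.2
    have c₂_nonneg := hc₂.nonneg
    obtain ⟨g₁', hg₁', hfg₁'⟩ := h₁ (ε / (c₂ + 1)) (by positivity)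
    refine ⟨g₁' * g₂, mul_mem hg₁' hg₂, ?_⟩
    rw [show f₁ * f₂ - g₁' * g₂ = f₁ * (f₂ - g₂) + (f₁ - g₁') * g₂ by ring]
    refine ((hc₁.mul hfg₂).mono ?_).add ((hfg₁'.mul hc₂).mono ?_)
    · rw [mul_div_left_comm]
      exact mul_le_of_le_one_right hε.le ((div_le_one (by positivity)).2 (by linarith))
    · rw [div_mul_eq_mul_div, mul_div_assoc]
      exact mul_le_of_le_one_right hε.le ((div_le_one (by positivity)).2 (by linarith))
  add_mem' := fun h₁ h₂ ε hε => by
    obtain ⟨g₁, hg₁, hfg₁⟩ := h₁ ε hε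
    obtain ⟨g₂, hg₂, hfg₂⟩ := h₂ ε hε
    refine ⟨g₁ + g₂, add_mem hg₁ hg₂, ?_⟩
    rw [add_sub_add_comm]
    exact hfg₁.add hfg₂
  algebraMap_mem' := fun x ε hε =>
    ⟨_, algebraMap_mem _ x, by simpa using CoeffNormLE.zero hε.le⟩

lemma inf_boundedSeries_le_uniformClosure : A ⊓ boundedSeries σ K ≤ uniformClosure A :=
  fun f hf ε hε => ⟨f, hf, by simpa using CoeffNormLE.zero hε.le⟩

lemma mem_uniformClosure_of_forall_exists
    (h : ∀ ε > 0, ∃ g ∈ uniformClosure A, CoeffNormLE (f - g) ε) : f ∈ uniformClosure A := by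
  intro ε hε
  obtain ⟨g, hg, hfg⟩ := h ε hε
  obtain ⟨g', hg', hgg'⟩ := hg ε hε
  exact ⟨g', hg', hfg.sub_trans hgg'⟩

lemma inv_mem_uniformClosure_of_coeffNormLE_one_sub {δ : ℝ} (hf : f ∈ uniformClosure A)
    (hδ : CoeffNormLE (1 - f) δ) (hδ1 : δ < 1) : f⁻¹ ∈ uniformClosure A := by
  have norm_constantCoeff := hδ.norm_constantCoeff_eq_one hδ1
  have constantCoeff_ne_zero : constantCoeff f ≠ 0 :=
    norm_ne_zero_iff.1 (norm_constantCoeff.trans_ne one_ne_zero)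
  have coeffNormLE_inv : CoeffNormLE f⁻¹ 1 := by
    refine CoeffNormLE.inv ?_ norm_constantCoeff
    simpa using CoeffNormLE.one.sub (hδ.mono hδ1.le)
  refine mem_uniformClosure_of_forall_exists fun ε hε => ?_
  obtain ⟨k, hk⟩ := exists_pow_lt_of_lt_one hε hδ1
  refine ⟨∑ j ∈ Finset.range k, (1 - f) ^ j,
    sum_mem fun j _ => pow_mem (sub_mem (one_mem _) hf) j, ?_⟩
  have geom_sum : f⁻¹ - ∑ j ∈ Finset.range k, (1 - f) ^ j = f⁻¹ * (1 - f) ^ k := by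
    have := mul_neg_geom_sum (1 - f) k
    rw [sub_sub_cancel] at this
    linear_combination -f⁻¹ * this + (∑ j ∈ Finset.range k, (1 - f) ^ j) *
      MvPowerSeries.mul_inv_cancel f constantCoeff_ne_zero
  rw [geom_sum]
  exact (coeffNormLE_inv.mul (hδ.pow k)).mono ((one_mul _).trans_le hk.le)

section AlmostInverse

variable {δ c : ℝ} (hδ : CoeffNormLE (1 - g * f) δ) (hδ1 : δ < 1)

include hδ hδ1

lemma constantCoeff_ne_zero_of_coeffNormLE_one_sub_mul : constantCoeff f ≠ 0 := by
  have := hδ.norm_constantCoeff_eq_one hδ1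
  rw [map_mul, norm_mul] at this
  exact norm_ne_zero_iff.1 (right_ne_zero_of_mul_eq_one this)

lemma inv_eq_mul_inv_of_coeffNormLE_one_sub_mul : f⁻¹ = g * (g * f)⁻¹ := by
  rw [MvPowerSeries.inv_eq_iff_mul_eq_one
    (constantCoeff_ne_zero_of_coeffNormLE_one_sub_mul hδ hδ1), mul_right_comm]
  exact MvPowerSeries.mul_inv_cancel _ <| norm_ne_zero_iff.1 <|
    (hδ.norm_constantCoeff_eq_one hδ1).trans_ne one_ne_zero

lemma inv_mem_uniformClosure (hf : f ∈ uniformClosure A) (hg : g ∈ uniformClosure A) :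
    f⁻¹ ∈ uniformClosure A := by
  rw [inv_eq_mul_inv_of_coeffNormLE_one_sub_mul hδ hδ1]
  exact mul_mem hg (inv_mem_uniformClosure_of_coeffNormLE_one_sub (mul_mem hg hf) hδ hδ1)

lemma CoeffNormLE.inv_of_one_sub_mul (hg : CoeffNormLE g c) : CoeffNormLE f⁻¹ c := by
  have coeffNormLE_mul : CoeffNormLE (g * f) 1 := by
    simpa using CoeffNormLE.one.sub (hδ.mono hδ1.le)
  rw [inv_eq_mul_inv_of_coeffNormLE_one_sub_mul hδ hδ1]
  simpa using hg.mul (coeffNormLE_mul.inv (hδ.norm_constantCoeff_eq_one hδ1))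

end AlmostInverse

end UniformClosure

section PolynomialsAway

open MvPowerSeries

variable {σ K : Type*} [NormedField K]

/-- The power series of the form `q / Φ ^ k` with `q` a polynomial. -/
def polynomialsAway {σ K : Type*} [Field K] (Φ : MvPolynomial σ K) :
    Subalgebra K (MvPowerSeries σ K) where
  carrier := {f | ∃ (k : ℕ) (q : MvPolynomial σ K), f * (Φ : MvPowerSeries σ K) ^ k = q}
  mul_mem' := by
    rintro f g ⟨k, q, hf⟩ ⟨l, r, hg⟩
    exact ⟨k + l, q * r, by rw [pow_add, mul_mul_mul_comm, hf, hg, MvPolynomial.coe_mul]⟩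
  add_mem' := by
    rintro f g ⟨k, q, hf⟩ ⟨l, r, hg⟩
    refine ⟨k + l, q * Φ ^ l + r * Φ ^ k, ?_⟩
    push_cast
    rw [← hf, ← hg]
    ring
  algebraMap_mem' := fun x => ⟨0, MvPolynomial.C x, by
    rw [pow_zero, mul_one, MvPolynomial.coe_C]
    rfl⟩

variable [IsUltrametricDist K] {Φ : MvPolynomial σ K}

lemma coe_mem_boundedSeries (q : MvPolynomial σ K) :
    (q : MvPowerSeries σ K) ∈ boundedSeries σ K := by
  refine ⟨∑ ν ∈ q.support, ‖q.coeff ν‖, fun ν => ?_⟩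
  rw [MvPolynomial.coeff_coe]
  by_cases hν : ν ∈ q.support
  · exact Finset.single_le_sum (f := fun ν => ‖q.coeff ν‖) (fun _ _ => norm_nonneg _) hν
  · rw [MvPolynomial.notMem_support_iff.1 hν, norm_zero]
    positivity

lemma coe_mem_uniformClosure (q : MvPolynomial σ K) :
    (q : MvPowerSeries σ K) ∈ uniformClosure (polynomialsAway Φ) :=
  inf_boundedSeries_le_uniformClosure
    ⟨⟨0, q, by rw [pow_zero, mul_one]⟩, coe_mem_boundedSeries q⟩

section Frobenius

variable (hΦ0 : constantCoeff (Φ : MvPowerSeries σ K) = 1)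
  (hΦ : CoeffNormLE (Φ : MvPowerSeries σ K) 1)

include hΦ0 hΦ

lemma coeffNormLE_inv_coe : CoeffNormLE (Φ : MvPowerSeries σ K)⁻¹ 1 :=
  hΦ.inv (by rw [hΦ0, norm_one])

lemma inv_mem_uniformClosure_polynomialsAway :
    (Φ : MvPowerSeries σ K)⁻¹ ∈ uniformClosure (polynomialsAway Φ) := by
  refine inf_boundedSeries_le_uniformClosure
    ⟨⟨1, 1, ?_⟩, ⟨_, coeffNormLE_inv_coe hΦ0 hΦ⟩⟩
  rw [pow_one, MvPolynomial.coe_one,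
    MvPowerSeries.inv_mul_cancel _ (hΦ0.trans_ne one_ne_zero)]

variable {p : ℕ} (hp : p ≠ 0) {δ : ℝ}
  (hδ : CoeffNormLE (expand p hp (Φ : MvPowerSeries σ K) - (Φ : MvPowerSeries σ K) ^ p) δ)
  (hδ1 : δ < 1)

include hδ hδ1

lemma inv_expand_mem_uniformClosure :
    (expand p hp (Φ : MvPowerSeries σ K))⁻¹ ∈ uniformClosure (polynomialsAway Φ) := by
  have coeffNormLE_one_sub : CoeffNormLE
      (1 - (Φ : MvPowerSeries σ K)⁻¹ ^ p * expand p hp (Φ : MvPowerSeries σ K)) δ := by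
    have inv_pow_mul_pow : (Φ : MvPowerSeries σ K)⁻¹ ^ p * (Φ : MvPowerSeries σ K) ^ p = 1 := by
      rw [← mul_pow, MvPowerSeries.inv_mul_cancel _ (hΦ0.trans_ne one_ne_zero), one_pow]
    rw [← inv_pow_mul_pow, ← mul_sub, ← neg_sub, mul_neg]
    simpa using (((coeffNormLE_inv_coe hΦ0 hΦ).pow p).mul hδ).neg
  refine inv_mem_uniformClosure coeffNormLE_one_sub hδ1 ?_
    (pow_mem (inv_mem_uniformClosure_polynomialsAway hΦ0 hΦ) p)
  rw [expand_eq_expand]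
  exact coe_mem_uniformClosure _

lemma expand_mem_uniformClosure {f : MvPowerSeries σ K}
    (hf : f ∈ uniformClosure (polynomialsAway Φ)) :
    expand p hp f ∈ uniformClosure (polynomialsAway Φ) := by
  refine mem_uniformClosure_of_forall_exists fun ε hε => ?_
  obtain ⟨g, ⟨⟨k, q, hgq⟩, -⟩, hfg⟩ := hf ε hε
  refine ⟨expand p hp g, ?_, by simpa using hfg.expand hp⟩
  have expand_eq : expand p hp g = (MvPolynomial.expand p q : MvPowerSeries σ K) *
      (expand p hp (Φ : MvPowerSeries σ K))⁻¹ ^ k := by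
    rw [← expand_eq_expand, ← hgq, map_mul, map_pow, mul_assoc, ← mul_pow,
      MvPowerSeries.mul_inv_cancel, one_pow, mul_one]
    rw [constantCoeff_expand, hΦ0]
    exact one_ne_zero
  rw [expand_eq]
  exact mul_mem (coe_mem_uniformClosure _)
    (pow_mem (inv_expand_mem_uniformClosure hΦ0 hΦ hp hδ hδ1) k)

end Frobenius

end PolynomialsAway

/-! ### Contraction -/

section Contraction

open MvPowerSeries

variable {σ K I : Type*} [NormedField K]

/-- `f` is the sum of the family `F` for uniform convergence of coefficients. -/
def CoeffHasSum (F : I → MvPowerSeries σ K) (f : MvPowerSeries σ K) : Prop :=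
  ∀ ε > 0, ∀ᶠ s : Finset I in Filter.atTop, CoeffNormLE (f - ∑ i ∈ s, F i) ε

variable [IsUltrametricDist K]

/-- A matrix with entries in the closure of `A` which is small outside the column `i₀` and whose
entry at `(i₀, i₀)` is close to `c • Φ`. -/
structure IsDominantKernel (A : Subalgebra K (MvPowerSeries σ K)) (Φ : MvPowerSeries σ K) (c : K)
    (i₀ : I) (T : I → I → MvPowerSeries σ K) : Prop where
  mem : ∀ ρ ν, T ρ ν ∈ uniformClosure A
  le_of_ne : ∀ ρ ν, ν ≠ i₀ → CoeffNormLE (T ρ ν) (‖c‖ ^ 2)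
  sub_le : CoeffNormLE (T i₀ i₀ - c • Φ) (‖c‖ ^ 2)

/-- `ζ` is an eigenvector, with eigenvalue `u`, of the Frobenius-semilinear operator with matrix
`T`; it is normalized by `ζ i₀ = 1`. -/
structure IsNormalizedEigenvector {p : ℕ} (hp : p ≠ 0) (T : I → I → MvPowerSeries σ K) (i₀ : I)
    (u : MvPowerSeries σ K) (ζ : I → MvPowerSeries σ K) : Prop where
  eq_one : ζ i₀ = 1
  le_one : ∀ ρ, CoeffNormLE (ζ ρ) 1
  hasSum : ∀ ρ, CoeffHasSum (fun ν => T ρ ν * expand p hp (ζ ν)) (u * ζ ρ)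

namespace IsNormalizedEigenvector

variable {A : Subalgebra K (MvPowerSeries σ K)} {Φ u : MvPowerSeries σ K} {c : K} {i₀ : I}
  {T : I → I → MvPowerSeries σ K} {ζ : I → MvPowerSeries σ K} {p : ℕ} {hp : p ≠ 0}
  (hζ : IsNormalizedEigenvector hp T i₀ u ζ) (hT : IsDominantKernel A Φ c i₀ T)

include hζ hT

lemma eigenvalue_sub_le (hc : c ≠ 0) : CoeffNormLE (u - c • Φ) (‖c‖ ^ 2) := by
  obtain ⟨s, hs, hi₀⟩ := ((hζ.hasSum i₀ (‖c‖ ^ 2) (by positivity)).and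
    (Filter.eventually_ge_atTop {i₀})).exists
  rw [Finset.singleton_subset_iff] at hi₀
  rw [← Finset.add_sum_erase s _ hi₀, hζ.eq_one, map_one, mul_one, mul_one] at hs
  have off_le : CoeffNormLE (∑ ν ∈ s.erase i₀, T i₀ ν * expand p hp (ζ ν)) (‖c‖ ^ 2) :=
    CoeffNormLE.sum (by positivity) fun ν hν => by
      simpa using (hT.le_of_ne i₀ ν (Finset.ne_of_mem_erase hν)).mul ((hζ.le_one ν).expand hp)
  have decomposition : u - c • Φ =
      (u - (T i₀ i₀ + ∑ ν ∈ s.erase i₀, T i₀ ν * expand p hp (ζ ν))) +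
        ∑ ν ∈ s.erase i₀, T i₀ ν * expand p hp (ζ ν) + (T i₀ i₀ - c • Φ) := by ring
  rw [decomposition]
  exact (hs.add off_le).add hT.sub_le

/-- The column `i₀` contributes no error because `ζ i₀ = 1` is known exactly. -/
lemma exists_mem_eigenvalue_mul_sub_le (hc : c ≠ 0)
    (hA : ∀ f ∈ uniformClosure A, expand p hp f ∈ uniformClosure A) {r : ℝ} (hr : 0 < r)
    (happrox : ∀ ρ, ∃ e ∈ uniformClosure A, CoeffNormLE (ζ ρ - e) r) (ρ : I) :
    ∃ e ∈ uniformClosure A, CoeffNormLE (u * ζ ρ - e) (‖c‖ ^ 2 * r) := by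
  have approx_term (ν : I) : ∃ e ∈ uniformClosure A,
      CoeffNormLE (T ρ ν * expand p hp (ζ ν - e)) (‖c‖ ^ 2 * r) := by
    by_cases hν : ν = i₀
    · refine ⟨1, one_mem _, ?_⟩
      rw [hν, hζ.eq_one, sub_self, map_zero, mul_zero]
      exact CoeffNormLE.zero (by positivity)
    · obtain ⟨e, he, hsub⟩ := happrox ν
      exact ⟨e, he, (hT.le_of_ne ρ ν hν).mul (hsub.expand hp)⟩
  choose e he hsub using approx_term
  obtain ⟨s, hs⟩ := (hζ.hasSum ρ (‖c‖ ^ 2 * r) (by positivity)).exists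
  refine ⟨∑ ν ∈ s, T ρ ν * expand p hp (e ν),
    sum_mem fun ν _ => mul_mem (hT.mem ρ ν) (hA _ (he ν)), hs.sub_trans ?_⟩
  rw [← Finset.sum_sub_distrib]
  refine CoeffNormLE.sum (by positivity) fun ν _ => ?_
  rw [← mul_sub, ← map_sub]
  exact hsub ν

end IsNormalizedEigenvector

variable {Φ Ψ f : MvPowerSeries σ K} {c : K}

lemma coeffNormLE_one_sub_smul_mul (hc : c ≠ 0) (hΦΨ : Ψ * Φ = 1) (hΨ : CoeffNormLE Ψ 1)
    (hf : CoeffNormLE (f - c • Φ) (‖c‖ ^ 2)) : CoeffNormLE (1 - (c⁻¹ • Ψ) * f) ‖c‖ := by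
  have one_sub_eq : 1 - (c⁻¹ • Ψ) * f = c⁻¹ • (Ψ * -(f - c • Φ)) := by
    rw [neg_sub, mul_sub, mul_smul_comm, hΦΨ, smul_sub, inv_smul_smul₀ hc, smul_mul_assoc]
  rw [one_sub_eq]
  refine ((hΨ.mul hf.neg).smul c⁻¹).mono ?_
  rw [norm_inv, one_mul, sq, inv_mul_cancel_left₀ (norm_ne_zero_iff.2 hc)]

namespace IsNormalizedEigenvector

variable {A : Subalgebra K (MvPowerSeries σ K)} {u : MvPowerSeries σ K} {i₀ : I}
  {T : I → I → MvPowerSeries σ K} {ζ : I → MvPowerSeries σ K} {p : ℕ} {hp : p ≠ 0}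
  (hζ : IsNormalizedEigenvector hp T i₀ u ζ) (hT : IsDominantKernel A Φ c i₀ T)
  (hc : c ≠ 0) (hc1 : ‖c‖ < 1) (hΦΨ : Ψ * Φ = 1) (hΨ : CoeffNormLE Ψ 1)

include hζ hT hc hc1 hΦΨ hΨ

lemma constantCoeff_eigenvalue_ne_zero : constantCoeff u ≠ 0 :=
  constantCoeff_ne_zero_of_coeffNormLE_one_sub_mul
    (coeffNormLE_one_sub_smul_mul hc hΦΨ hΨ (hζ.eigenvalue_sub_le hT hc)) hc1

variable (hΨ_mem : Ψ ∈ uniformClosure A)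

include hΨ_mem

/-- Dividing by an approximation of `u = u * ζ i₀` loses only a factor `‖c‖` of precision. -/
lemma exists_mem_sub_le_of_eigenvalue_mul {r : ℝ} (hr1 : r ≤ 1)
    (happrox : ∀ ρ, ∃ e ∈ uniformClosure A, CoeffNormLE (u * ζ ρ - e) (‖c‖ ^ 2 * r)) (ρ : I) :
    ∃ e ∈ uniformClosure A, CoeffNormLE (ζ ρ - e) (‖c‖ * r) := by
  choose e he hsub using happrox
  have norm_ne_zero : ‖c‖ ≠ 0 := norm_ne_zero_iff.2 hc
  have e_sub_eigenvalue : CoeffNormLE (e i₀ - u) (‖c‖ ^ 2 * r) := by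
    simpa [hζ.eq_one] using (hsub i₀).neg
  have e_sub_smul : CoeffNormLE (e i₀ - c • Φ) (‖c‖ ^ 2) :=
    (e_sub_eigenvalue.mono (mul_le_of_le_one_right (by positivity) hr1)).sub_trans
      (hζ.eigenvalue_sub_le hT hc)
  have one_sub_le := coeffNormLE_one_sub_smul_mul hc hΦΨ hΨ e_sub_smul
  have inv_mem : (e i₀)⁻¹ ∈ uniformClosure A :=
    inv_mem_uniformClosure one_sub_le hc1 (he i₀) (Subalgebra.smul_mem _ hΨ_mem _)
  have inv_le : CoeffNormLE (e i₀)⁻¹ ‖c‖⁻¹ := by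
    simpa using CoeffNormLE.inv_of_one_sub_mul one_sub_le hc1 (hΨ.smul c⁻¹)
  have error_eq : ζ ρ - e ρ * (e i₀)⁻¹ =
      (e i₀)⁻¹ * (ζ ρ * (e i₀ - u) + (u * ζ ρ - e ρ)) := by
    linear_combination -ζ ρ * MvPowerSeries.mul_inv_cancel (e i₀)
      (constantCoeff_ne_zero_of_coeffNormLE_one_sub_mul one_sub_le hc1)
  refine ⟨e ρ * (e i₀)⁻¹, mul_mem (he ρ) inv_mem, ?_⟩
  rw [error_eq]
  have numerator_le : CoeffNormLE (ζ ρ * (e i₀ - u) + (u * ζ ρ - e ρ)) (‖c‖ ^ 2 * r) := by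
    refine CoeffNormLE.add ?_ (hsub ρ)
    simpa using (hζ.le_one ρ).mul e_sub_eigenvalue
  refine (inv_le.mul numerator_le).mono ?_
  rw [sq, mul_assoc, inv_mul_cancel_left₀ norm_ne_zero]

variable (hA : ∀ f ∈ uniformClosure A, expand p hp f ∈ uniformClosure A)

include hA

lemma exists_mem_sub_le_pow (k : ℕ) (ρ : I) :
    ∃ e ∈ uniformClosure A, CoeffNormLE (ζ ρ - e) (‖c‖ ^ k) := by
  induction k generalizing ρ with
  | zero => exact ⟨0, zero_mem _, by simpa using hζ.le_one ρ⟩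
  | succ k ih =>
    rw [pow_succ']
    exact hζ.exists_mem_sub_le_of_eigenvalue_mul hT hc hc1 hΦΨ hΨ hΨ_mem
      (pow_le_one₀ (norm_nonneg c) hc1.le)
      (hζ.exists_mem_eigenvalue_mul_sub_le hT hc hA (by positivity) ih) ρ

lemma mem_uniformClosure (ρ : I) : ζ ρ ∈ uniformClosure A := by
  refine mem_uniformClosure_of_forall_exists fun ε hε => ?_
  obtain ⟨k, hk⟩ := exists_pow_lt_of_lt_one hε hc1
  obtain ⟨e, he, hsub⟩ := hζ.exists_mem_sub_le_pow hT hc hc1 hΦΨ hΨ hΨ_mem hA k ρ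
  exact ⟨e, he, hsub.mono hk.le⟩

lemma eigenvalue_mem_uniformClosure : u ∈ uniformClosure A := by
  refine mem_uniformClosure_of_forall_exists fun ε hε => ?_
  obtain ⟨s, hs⟩ := (hζ.hasSum i₀ ε hε).exists
  rw [hζ.eq_one, mul_one] at hs
  exact ⟨_, sum_mem fun ν _ => mul_mem (hT.mem i₀ ν) (hA _
    (hζ.mem_uniformClosure hT hc hc1 hΦΨ hΨ hΨ_mem hA ν)), hs⟩

end IsNormalizedEigenvector

end Contraction

/-! ### Functions on `𝒟₊` -/

section Evaluation

open MvPowerSeries Filter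

variable {σ K : Type*} [NormedField K] {f g : MvPowerSeries σ K} {y : σ → K} {c d : ℝ}

/-- The value at `y` of a power series; it is meaningful for bounded coefficients and `‖y i‖ < 1`,
where the defining series converges. -/
noncomputable def evalSeries [Fintype σ] (y : σ → K) (f : MvPowerSeries σ K) : K :=
  ∑' ν : σ →₀ ℕ, coeff ν f * ∏ i, y i ^ ν i

lemma evalSeries_coe [Fintype σ] (y : σ → K) (q : MvPolynomial σ K) :
    evalSeries y (q : MvPowerSeries σ K) = MvPolynomial.eval y q := by
  rw [evalSeries, MvPolynomial.eval_eq', tsum_eq_sum (s := q.support)]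
  · simp only [MvPolynomial.coeff_coe]
  · intro ν hν
    rw [MvPolynomial.coeff_coe, MvPolynomial.notMem_support_iff.1 hν, zero_mul]

lemma norm_prod_pow_le_pow_degree [Fintype σ] {r : ℝ} (hy : ∀ i, ‖y i‖ ≤ r) (ν : σ →₀ ℕ) :
    ‖∏ i, y i ^ ν i‖ ≤ r ^ ν.degree := by
  rw [norm_prod, Finsupp.degree_eq_sum, ← Finset.prod_pow_eq_pow_sum]
  refine Finset.prod_le_prod (fun _ _ => norm_nonneg _) fun i _ => ?_
  rw [norm_pow]
  exact pow_le_pow_left₀ (norm_nonneg _) (hy i) _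

lemma CoeffNormLE.norm_coeff_mul_prod_pow_le [Fintype σ] (hf : CoeffNormLE f c)
    (hy : ∀ i, ‖y i‖ ≤ 1) (ν : σ →₀ ℕ) : ‖coeff ν f * ∏ i, y i ^ ν i‖ ≤ c := by
  simpa using norm_mul_le_of_le (hf ν) (norm_prod_pow_le_pow_degree hy ν)

lemma exists_forall_norm_le_lt_one [Finite σ] (hy : ∀ i, ‖y i‖ < 1) :
    ∃ r : ℝ, 0 < r ∧ r < 1 ∧ ∀ i, ‖y i‖ ≤ r := by
  cases nonempty_fintype σ
  obtain ⟨r, hr⟩ : ∃ r, r = max (1 / 2) ‖y‖ := ⟨_, rfl⟩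
  refine ⟨r, ?_, ?_, fun i => ?_⟩
  · rw [hr]
    positivity
  · rw [hr]
    exact max_lt (by norm_num) ((pi_norm_lt_iff one_pos).2 hy)
  · rw [hr]
    exact (norm_le_pi_norm y i).trans (le_max_right _ _)

variable [IsUltrametricDist K]

lemma CoeffNormLE.norm_eval_le {q : MvPolynomial σ K}
    (hq : CoeffNormLE (q : MvPowerSeries σ K) c) (hy : ∀ i, ‖y i‖ ≤ 1) :
    ‖MvPolynomial.eval y q‖ ≤ c := by
  rw [MvPolynomial.eval_eq]
  refine IsUltrametricDist.norm_sum_le_of_forall_le_of_nonneg hq.nonneg fun ν _ => ?_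
  have norm_prod_le_one : ‖∏ i ∈ ν.support, y i ^ ν i‖ ≤ 1 := by
    rw [norm_prod]
    refine Finset.prod_le_one (fun _ _ => norm_nonneg _) fun i _ => ?_
    rw [norm_pow]
    exact pow_le_one₀ (norm_nonneg _) (hy i)
  rw [← MvPolynomial.coeff_coe]
  simpa only [mul_one] using norm_mul_le_of_le (hq ν) norm_prod_le_one

lemma norm_eval_div_sub_eval_div_le {Φ q r : MvPolynomial σ K} {k l : ℕ}
    (hΦ : CoeffNormLE (Φ : MvPowerSeries σ K) 1) (hf : f * (Φ : MvPowerSeries σ K) ^ k = q)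
    (hg : g * (Φ : MvPowerSeries σ K) ^ l = r) (hfg : CoeffNormLE (f - g) c)
    (hy : ∀ i, ‖y i‖ ≤ 1) (hΦy : ‖MvPolynomial.eval y Φ‖ = 1) :
    ‖MvPolynomial.eval y q / MvPolynomial.eval y Φ ^ k -
      MvPolynomial.eval y r / MvPolynomial.eval y Φ ^ l‖ ≤ c := by
  have eval_ne_zero : MvPolynomial.eval y Φ ≠ 0 := norm_ne_zero_iff.1 (hΦy.trans_ne one_ne_zero)
  have coe_numerator : (f - g) * (Φ : MvPowerSeries σ K) ^ (k + l) =
      (q * Φ ^ l - Φ ^ k * r : MvPolynomial σ K) := by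
    rw [← MvPolynomial.coeToMvPowerSeries.ringHom_apply (q * Φ ^ l - Φ ^ k * r), map_sub, map_mul,
      map_mul, map_pow, map_pow]
    simp only [MvPolynomial.coeToMvPowerSeries.ringHom_apply, ← hf, ← hg]
    ring
  have coeffNormLE_numerator := hfg.mul (hΦ.pow_of_one (k + l))
  rw [coe_numerator, mul_one] at coeffNormLE_numerator
  rw [div_sub_div _ _ (pow_ne_zero k eval_ne_zero) (pow_ne_zero l eval_ne_zero), norm_div,
    norm_mul, norm_pow, norm_pow, hΦy, one_pow, one_pow, mul_one, div_one]
  simpa only [map_sub, map_mul, map_pow] using coeffNormLE_numerator.norm_eval_le hy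

section

variable [Fintype σ] [CompleteSpace K]

lemma CoeffNormLE.summable_coeff_mul_prod_pow (hf : CoeffNormLE f c) (hy : ∀ i, ‖y i‖ < 1) :
    Summable fun ν : σ →₀ ℕ => coeff ν f * ∏ i, y i ^ ν i := by
  obtain ⟨r, hr0, hr1, hr⟩ := exists_forall_norm_le_lt_one hy
  refine NonarchimedeanAddGroup.summable_of_tendsto_cofinite_zero ?_
  rw [Metric.tendsto_nhds]
  intro ε hε
  rw [eventually_cofinite]
  refine (hf.finite_le_termWeight hr0 hr1 hε).subset fun ν hν => ?_
  rw [Set.mem_ofPred_eq, dist_zero_right, not_lt, norm_mul] at hν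
  exact hν.trans (mul_le_mul_of_nonneg_left (norm_prod_pow_le_pow_degree hr ν) (norm_nonneg _))

lemma CoeffNormLE.norm_evalSeries_le (hf : CoeffNormLE f c) (hy : ∀ i, ‖y i‖ < 1) :
    ‖evalSeries y f‖ ≤ c :=
  le_of_tendsto (hf.summable_coeff_mul_prod_pow hy).hasSum.norm <| Eventually.of_forall fun _ =>
    IsUltrametricDist.norm_sum_le_of_forall_le_of_nonneg hf.nonneg fun ν _ =>
      hf.norm_coeff_mul_prod_pow_le (fun i => (hy i).le) ν

lemma CoeffNormLE.evalSeries_sub (hf : CoeffNormLE f c) (hg : CoeffNormLE g d)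
    (hy : ∀ i, ‖y i‖ < 1) : evalSeries y (f - g) = evalSeries y f - evalSeries y g := by
  rw [evalSeries, evalSeries, evalSeries, ← (hf.summable_coeff_mul_prod_pow hy).tsum_sub
    (hg.summable_coeff_mul_prod_pow hy)]
  simp only [map_sub, sub_mul]

lemma CoeffNormLE.evalSeries_mul (hf : CoeffNormLE f c) (hg : CoeffNormLE g d)
    (hy : ∀ i, ‖y i‖ < 1) : evalSeries y (f * g) = evalSeries y f * evalSeries y g := by
  have : NonarchimedeanRing K :=
    { is_nonarchimedean := NonarchimedeanAddGroup.is_nonarchimedean }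
  have summable_f := hf.summable_coeff_mul_prod_pow hy
  have summable_g := hg.summable_coeff_mul_prod_pow hy
  have summable_mul := summable_f.mul_of_nonarchimedean summable_g
  have cauchy_product := summable_f.tsum_mul_tsum_eq_tsum_sum_antidiagonal summable_g summable_mul
  unfold evalSeries
  rw [cauchy_product]
  refine tsum_congr fun ν => ?_
  rw [coeff_mul, Finset.sum_mul]
  refine Finset.sum_congr rfl fun x hx => ?_
  rw [Finset.HasAntidiagonal.mem_antidiagonal] at hx
  simp only [← hx, Finsupp.add_apply, pow_add, Finset.prod_mul_distrib]
  ring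

lemma evalSeries_eq_eval_div {Φ q : MvPolynomial σ K} {k : ℕ}
    (hf : CoeffNormLE f c) (hfq : f * (Φ : MvPowerSeries σ K) ^ k = q) (hy : ∀ i, ‖y i‖ < 1)
    (hΦy : MvPolynomial.eval y Φ ≠ 0) :
    evalSeries y f = MvPolynomial.eval y q / MvPolynomial.eval y Φ ^ k := by
  obtain ⟨d, hd⟩ := coe_mem_boundedSeries (Φ ^ k)
  rw [eq_div_iff (pow_ne_zero k hΦy), ← map_pow, ← evalSeries_coe, ← hf.evalSeries_mul hd hy,
    MvPolynomial.coe_pow, hfq, evalSeries_coe]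

end

lemma norm_eval_eq_one [Finite σ] [CompleteSpace K] {Φ : MvPolynomial σ K}
    (hΦ0 : constantCoeff (Φ : MvPowerSeries σ K) = 1)
    (hΦ : CoeffNormLE (Φ : MvPowerSeries σ K) 1) (hy : ∀ i, ‖y i‖ < 1) :
    ‖MvPolynomial.eval y Φ‖ = 1 := by
  cases nonempty_fintype σ
  have inv_le := coeffNormLE_inv_coe hΦ0 hΦ
  have norm_mul_norm : ‖evalSeries y (Φ : MvPowerSeries σ K)⁻¹‖ * ‖MvPolynomial.eval y Φ‖ = 1 := by
    rw [← evalSeries_coe, ← norm_mul, ← inv_le.evalSeries_mul hΦ hy,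
      MvPowerSeries.inv_mul_cancel _ (hΦ0.trans_ne one_ne_zero), ← MvPolynomial.coe_one,
      evalSeries_coe, map_one, norm_one]
  refine le_antisymm (hΦ.norm_eval_le fun i => (hy i).le) ?_
  rw [← norm_mul_norm]
  exact mul_le_of_le_one_left (norm_nonneg _) (inv_le.norm_evalSeries_le hy)

end Evaluation

section UniformLimits

open MvPowerSeries Filter

lemma exists_tendstoUniformlyOn_of_norm_sub_le {X E : Type*} [NormedAddCommGroup E]
    [CompleteSpace E] {s : Set X} {u : ℕ → X → E}
    (hu : ∀ k, ∀ m ≥ k, ∀ x ∈ s, ‖u k x - u m x‖ ≤ 1 / (k + 1)) :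
    ∃ F, TendstoUniformlyOn u F atTop s := by
  have cauchy : UniformCauchySeqOn u atTop s := by
    rw [Metric.uniformCauchySeqOn_iff]
    intro ε hε
    obtain ⟨k, hk⟩ := exists_nat_one_div_lt (half_pos hε)
    refine ⟨k, fun m hm l hl x hx => ?_⟩
    have hm_le := hu k m hm x hx
    have hl_le := hu k l hl x hx
    rw [← dist_eq_norm] at hm_le hl_le
    linarith [dist_triangle_left (u m x) (u l x) (u k x)]
  have pointwise (x : X) : ∃ z, x ∈ s → Tendsto (fun k => u k x) atTop (nhds z) := by
    by_cases hx : x ∈ s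
    · obtain ⟨z, hz⟩ := cauchySeq_tendsto_of_complete (cauchy.cauchySeq hx)
      exact ⟨z, fun _ => hz⟩
    · exact ⟨0, fun h => absurd h hx⟩
  choose F hF using pointwise
  exact ⟨F, cauchy.tendstoUniformlyOn_of_tendsto hF⟩

variable {n N p : ℕ} {a : Fin (N + 1) → Fin n → ℤ} {K : Type*} [NormedField K]
  [IsUltrametricDist K] [CompleteSpace K] {Φ : MvPolynomial (Fin N) K}
  {f : MvPowerSeries (Fin N) K}

lemma memR'_of_mem_uniformClosure (hΦ0 : constantCoeff (Φ : MvPowerSeries (Fin N) K) = 1)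
    (hΦ : CoeffNormLE (Φ : MvPowerSeries (Fin N) K) 1)
    (hΦ1 : ∀ lam, MvPolynomial.eval (fun i => lam i.succ / lam 0) Φ = Phi1 p a lam)
    (hf : f ∈ uniformClosure (polynomialsAway Φ)) : memR' p a f := by
  choose g hg hfg using fun m : ℕ => hf (1 / (m + 1)) Nat.one_div_pos_of_nat
  choose k q hgq using fun m => (hg m).1
  choose c hc using fun m => (hg m).2
  obtain ⟨d, hd⟩ : f ∈ boundedSeries (Fin N) K := by
    simpa using add_mem (⟨_, hfg 0⟩ : f - g 0 ∈ boundedSeries _ K) (hg 0).2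
  obtain ⟨F, hF⟩ := exists_tendstoUniformlyOn_of_norm_sub_le (s := Dplus p a (K := K))
    (u := fun m lam => MvPolynomial.eval (fun i => lam i.succ / lam 0) (q m) /
      MvPolynomial.eval (fun i => lam i.succ / lam 0) Φ ^ k m) fun l m hlm lam hlam => by
    refine norm_eval_div_sub_eval_div_le hΦ (hgq l) (hgq m) ?_ hlam.2.1 (by rw [hΦ1, hlam.2.2])
    have : CoeffNormLE (g l - f) (1 / (l + 1)) := by simpa using (hfg l).neg
    exact this.sub_trans ((hfg m).mono (Nat.one_div_le_one_div hlm))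
  have eval_ne_zero {lam : Fin (N + 1) → K} (hlam : lam ∈ Dplus p a) :
      MvPolynomial.eval (fun i => lam i.succ / lam 0) Φ ≠ 0 := by
    rw [← norm_ne_zero_iff, hΦ1, hlam.2.2]
    exact one_ne_zero
  refine ⟨F, ⟨_, fun m => ⟨q m, Φ ^ k m, fun lam hlam => ?_, fun lam _ => ?_⟩, hF⟩,
    fun lam hlam => ?_⟩
  · rw [map_pow]
    exact pow_ne_zero _ (eval_ne_zero hlam)
  · rw [map_pow]
  · have mem_Dplus : lam ∈ Dplus p a :=
      ⟨hlam.1, fun i => (hlam.2 i).le, by rw [← hΦ1, norm_eval_eq_one hΦ0 hΦ hlam.2]⟩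
    have evalSeries_eq : evalSeries (fun i => lam i.succ / lam 0) f = F lam := by
      refine tendsto_nhds_unique ?_ (hF.tendsto_at mem_Dplus)
      rw [tendsto_iff_norm_sub_tendsto_zero]
      refine squeeze_zero (fun _ => norm_nonneg _) (fun m => ?_)
        (tendsto_one_div_add_atTop_nhds_zero_nat (𝕜 := ℝ))
      rw [← evalSeries_eq_eval_div (hc m) (hgq m) hlam.2 (eval_ne_zero mem_Dplus), norm_sub_rev,
        ← hd.evalSeries_sub (hc m) hlam.2]
      exact (hfg m).norm_evalSeries_le hlam.2
    rw [← evalSeries_eq]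
    exact (hd.summable_coeff_mul_prod_pow hlam.2).hasSum

end UniformLimits

/-! ### The Frobenius matrix -/

section IntegralPolynomials

variable {σ K : Type*} [NormedField K] [IsUltrametricDist K]

lemma coeffNormLE_map_intCast (q : MvPolynomial σ ℤ) :
    CoeffNormLE (MvPolynomial.map (Int.castRingHom K) q : MvPowerSeries σ K) 1 := fun ν => by
  rw [MvPolynomial.coeff_coe, MvPolynomial.coeff_map]
  exact IsUltrametricDist.norm_intCast_le_one K _

lemma C_natCast_dvd_expand_sub_pow (p : ℕ) [Fact p.Prime] (q : MvPolynomial σ ℤ) :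
    MvPolynomial.C (p : ℤ) ∣ MvPolynomial.expand p q - q ^ p := by
  rw [MvPolynomial.C_dvd_iff_zmod, map_sub, sub_eq_zero, MvPolynomial.map_expand, map_pow,
    MvPolynomial.expand_zmod]

lemma coeffNormLE_expand_sub_pow {p : ℕ} [Fact p.Prime] (hp : p ≠ 0) (q : MvPolynomial σ ℤ) :
    CoeffNormLE (MvPowerSeries.expand p hp (MvPolynomial.map (Int.castRingHom K) q) -
      (MvPolynomial.map (Int.castRingHom K) q : MvPowerSeries σ K) ^ p) ‖(p : K)‖ := by
  obtain ⟨r, hr⟩ := C_natCast_dvd_expand_sub_pow p q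
  have sub_eq_smul : MvPowerSeries.expand p hp (MvPolynomial.map (Int.castRingHom K) q) -
      (MvPolynomial.map (Int.castRingHom K) q : MvPowerSeries σ K) ^ p =
      (p : K) • (MvPolynomial.map (Int.castRingHom K) r : MvPowerSeries σ K) := by
    rw [MvPowerSeries.expand_eq_expand, ← MvPolynomial.map_expand, eq_add_of_sub_eq hr, map_add,
      map_pow, map_mul, MvPolynomial.coe_add, MvPolynomial.coe_pow, add_sub_cancel_right,
      MvPolynomial.coe_mul, MvPolynomial.map_C, MvPolynomial.coe_C, map_natCast,
      MvPowerSeries.smul_eq_C_mul]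
  rw [sub_eq_smul]
  simpa using (coeffNormLE_map_intCast r).smul (p : K)

end IntegralPolynomials

section PhiOne

variable {n N : ℕ} (p : ℕ) (a : Fin (N + 1) → Fin n → ℤ)

/-- The truncation `Φ_1` as a polynomial with integer coefficients in the `λ_i/λ_0`. -/
noncomputable def phiOneInt : MvPolynomial (Fin N) ℤ :=
  ∑ l ∈ (Fintype.piFinset fun _ : Fin N => Finset.range p).filter
      (fun l => l ∈ LplusSet a ∧ ∑ i, l i ≤ p - 1),
    MvPolynomial.monomial (Finsupp.equivFunOnFinite.symm l)
      ((-1) ^ (∑ i, l i) * (Nat.multinomial Finset.univ l : ℤ))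

lemma eval_map_phiOneInt {K : Type*} [Field K] (lam : Fin (N + 1) → K) :
    MvPolynomial.eval (fun i => lam i.succ / lam 0)
      (MvPolynomial.map (Int.castRingHom K) (phiOneInt p a)) = Phi1 p a lam := by
  rw [phiOneInt, Phi1, map_sum, map_sum]
  refine Finset.sum_congr rfl fun l _ => ?_
  rw [MvPolynomial.map_monomial, MvPolynomial.eval_monomial, Finsupp.prod_fintype _ _ (by simp)]
  simp

variable {p}

lemma coeff_phiOneInt (hp : p ≠ 0) (ν : Fin N →₀ ℕ) :
    MvPolynomial.coeff ν (phiOneInt p a) = if ⇑ν ∈ LplusSet a ∧ ∑ i, ν i ≤ p - 1 then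
      (-1) ^ (∑ i, ν i) * (Nat.multinomial Finset.univ ν : ℤ) else 0 := by
  have symm_eq_iff (l : Fin N → ℕ) : Finsupp.equivFunOnFinite.symm l = ν ↔ ⇑ν = l := by
    rw [Equiv.symm_apply_eq, eq_comm]
    rfl
  have lt_of_sum_le (h : ∑ i, ν i ≤ p - 1) (i : Fin N) : ν i < p := by
    have := (Finset.single_le_sum (fun j _ => (ν j).zero_le) (Finset.mem_univ i)).trans h
    omega
  simp only [phiOneInt, MvPolynomial.coeff_sum, MvPolynomial.coeff_monomial, symm_eq_iff,
    Finset.sum_ite_eq, Finset.mem_filter, Fintype.mem_piFinset, Finset.mem_range]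
  exact if_congr (and_iff_right_of_imp fun h => lt_of_sum_le h.2) rfl rfl

lemma constantCoeff_map_phiOneInt {K : Type*} [Field K] (hp : p ≠ 0) :
    MvPowerSeries.constantCoeff
      (MvPolynomial.map (Int.castRingHom K) (phiOneInt p a) : MvPowerSeries (Fin N) K) = 1 := by
  rw [← MvPowerSeries.coeff_zero_eq_constantCoeff_apply, MvPolynomial.coeff_coe,
    MvPolynomial.coeff_map, coeff_phiOneInt a hp]
  simp [LplusSet, Nat.multinomial]

end PhiOne

section FrobeniusMatrix

variable {n N p : ℕ} {a : Fin (N + 1) → Fin n → ℤ} {K : Type*}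

lemma coe_truncTotal_bone [Field K] (π : K) (μ : Fin (n + 1) → ℤ) :
    ((Bone p a π μ : MvPowerSeries (Fin N) K).truncTotal ((μ 0).toNat + 1) :
      MvPowerSeries (Fin N) K) = Bone p a π μ := by
  ext ν
  rw [MvPolynomial.coeff_coe, MvPowerSeries.coeff_truncTotal_eq_ite]
  refine ite_eq_left_iff.2 fun hν => (if_neg fun h => hν ?_).symm
  rw [Finsupp.degree_eq_sum]
  have := h.1
  rw [← Nat.cast_sum] at this
  omega

lemma sub_zsmul_hat_add_sum_eq_iff (m : ℤ) (l : Fin N → ℕ) :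
    (m - ∑ i, (l i : ℤ)) • hat (a 0) + ∑ i, (l i : ℤ) • hat (a i.succ) = m • hat (a 0) ↔
      l ∈ LplusSet a := by
  rw [sub_smul, sub_add_eq_add_sub, sub_eq_iff_eq_add, add_right_inj, LplusSet, Set.mem_ofPred_eq]
  simp only [← Nat.cast_sum, natCast_zsmul]

lemma bone_nsmul_hat_apply [Field K] (π : K) (m : ℕ) (ν : Fin N →₀ ℕ) :
    Bone p a π (m • hat (a 0)) ν = if ⇑ν ∈ LplusSet a ∧ ∑ i, ν i ≤ m then
      dworkB p π (m - ∑ i, ν i) * ∏ i, dworkB p π (ν i) else 0 := by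
  have apply_zero : (m • hat (a 0)) 0 = (m : ℤ) := by simp [hat]
  have nonneg_iff : 0 ≤ (m : ℤ) - ∑ i, (ν i : ℤ) ↔ ∑ i, ν i ≤ m := by
    rw [sub_nonneg, ← Nat.cast_sum, Nat.cast_le]
  have toNat_eq : ((m : ℤ) - ∑ i, (ν i : ℤ)).toNat = m - ∑ i, ν i := by
    rw [← Nat.cast_sum]
    omega
  rw [Bone, apply_zero, toNat_eq, ← natCast_zsmul (hat (a 0)) m]
  exact if_congr (by rw [sub_zsmul_hat_add_sum_eq_iff, nonneg_iff, and_comm]) rfl rfl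

lemma dvd_choose_pred_sub_neg_one_pow [Fact p.Prime] {s : ℕ} (hs : s < p) :
    (p : ℤ) ∣ ((p - 1).choose s : ℤ) - (-1) ^ s := by
  induction s with
  | zero => simp
  | succ s ih =>
    have dvd_choose : (p : ℤ) ∣ (p.choose (s + 1) : ℤ) :=
      Int.natCast_dvd_natCast.2 ((Fact.out : p.Prime).dvd_choose_self s.succ_ne_zero hs)
    have pascal : p.choose (s + 1) = (p - 1).choose s + (p - 1).choose (s + 1) :=
      Nat.choose_succ_right p s (by omega)
    rw [pascal] at dvd_choose
    have difference : ((p - 1).choose (s + 1) : ℤ) - (-1) ^ (s + 1) =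
        (((p - 1).choose s + (p - 1).choose (s + 1) : ℕ) : ℤ) -
          (((p - 1).choose s : ℤ) - (-1) ^ s) := by
      push_cast
      ring
    rw [difference]
    exact dvd_sub dvd_choose (ih (by omega))

lemma dworkB_mul_prod_dworkB {σ : Type*} [Fintype σ] [Field K] [CharZero K] {m : ℕ} (hm : m < p)
    (π : K) {ν : σ → ℕ} (hν : ∑ i, ν i ≤ m) :
    dworkB p π (m - ∑ i, ν i) * ∏ i, dworkB p π (ν i) =
      π ^ m / (m.factorial : K) *
        (m.choose (∑ i, ν i) * Nat.multinomial Finset.univ ν : ℕ) := by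
  have prod_eq : ∏ i, dworkB p π (ν i) =
      π ^ (∑ i, ν i) / ((∏ i, (ν i).factorial : ℕ) : K) := by
    rw [← Finset.prod_pow_eq_pow_sum, Nat.cast_prod, ← Finset.prod_div_distrib]
    refine Finset.prod_congr rfl fun i hi => dworkB_of_lt π ?_
    exact (Finset.single_le_sum (fun j _ => (ν j).zero_le) hi).trans_lt (hν.trans_lt hm)
  have multinomial_spec : ((∏ i, (ν i).factorial : ℕ) : K) * Nat.multinomial Finset.univ ν =
      ((∑ i, ν i).factorial : K) := mod_cast Nat.multinomial_spec Finset.univ ν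
  have choose_spec : (m.choose (∑ i, ν i) : K) * (∑ i, ν i).factorial *
      (m - ∑ i, ν i).factorial = m.factorial :=
    mod_cast Nat.choose_mul_factorial_mul_factorial hν
  have prod_ne_zero : ((∏ i, (ν i).factorial : ℕ) : K) ≠ 0 :=
    Nat.cast_ne_zero.2 (Finset.prod_ne_zero_iff.2 fun i _ => Nat.factorial_ne_zero _)
  have factorial_ne_zero (k : ℕ) : (k.factorial : K) ≠ 0 :=
    Nat.cast_ne_zero.2 (Nat.factorial_ne_zero k)
  rw [prod_eq, dworkB_of_lt π ((Nat.sub_le _ _).trans_lt hm), div_mul_div_comm, ← pow_add,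
    Nat.sub_add_cancel hν, div_mul_eq_mul_div, div_eq_div_iff
    (mul_ne_zero (factorial_ne_zero _) prod_ne_zero) (factorial_ne_zero _), ← choose_spec,
    ← multinomial_spec, Nat.cast_mul]
  ring

variable [Fact p.Prime] [NormedField K] [NormedAlgebra ℚ_[p] K] {π : K}

lemma norm_pow_div_factorial_pred (hπ : π ^ (p - 1) = -(p : K)) :
    ‖π ^ (p - 1) / ((p - 1).factorial : K)‖ = (p : ℝ)⁻¹ := by
  rw [norm_div, norm_factorial_pred_prime, div_one, hπ, norm_neg, norm_natCast_prime]

variable [IsUltrametricDist K]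

lemma coeffNormLE_zpow_smul_bone (hp2 : p ≠ 2) (hπ : π ^ (p - 1) = -(p : K)) {k r : ℤ}
    (hk : 2 ≤ k) (hr : 1 ≤ r) {μ : Fin (n + 1) → ℤ} (hμ : μ 0 = p * k - r) :
    CoeffNormLE (π ^ (r - k) • Bone p a π μ) ((p : ℝ)⁻¹ ^ 2) := by
  intro ν
  rw [MvPowerSeries.coeff_smul, MvPowerSeries.coeff_apply, Bone]
  split_ifs with h
  · refine norm_zpow_mul_le_of_norm_dworkDenom_mul_le hp2 hπ
      (m := (μ 0 - ∑ i, (ν i : ℤ)).toNat + ∑ i, ν i) ?_ hk hr ?_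
    · rw [Nat.cast_add, Int.toNat_of_nonneg h.1, Nat.cast_sum, sub_add_cancel, hμ]
    · rw [pow_add]
      exact norm_dworkDenom_mul_mul_le p (norm_dworkDenom_mul_dworkB_le hπ _)
        (norm_dworkDenom_mul_prod_dworkB_le hπ Finset.univ ν)
  · rw [mul_zero, norm_zero]
    positivity

/- The coefficients of the two sides are `(p-1 choose s)` and `(-1)^s` times a multinomial
coefficient, where `s` is the degree. -/
lemma coeffNormLE_bone_sub_smul_phiOne (hπ : π ^ (p - 1) = -(p : K)) :
    CoeffNormLE (Bone p a π ((p - 1) • hat (a 0)) - (π ^ (p - 1) / ((p - 1).factorial : K)) •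
      (MvPolynomial.map (Int.castRingHom K) (phiOneInt p a) : MvPowerSeries (Fin N) K))
      ((p : ℝ)⁻¹ ^ 2) := by
  intro ν
  have hp := (Fact.out : p.Prime).pos
  have := charZero_of_normedAlgebra_padic p K
  rw [map_sub, MvPowerSeries.coeff_smul, MvPolynomial.coeff_coe, MvPolynomial.coeff_map,
    coeff_phiOneInt a hp.ne', MvPowerSeries.coeff_apply, bone_nsmul_hat_apply]
  split_ifs with h
  · obtain ⟨z, hz⟩ := dvd_choose_pred_sub_neg_one_pow (p := p) (s := ∑ i, ν i) (by omega)
    have factor : π ^ (p - 1) / ((p - 1).factorial : K) *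
        ((p - 1).choose (∑ i, ν i) * Nat.multinomial Finset.univ ν : ℕ) -
        π ^ (p - 1) / ((p - 1).factorial : K) * Int.castRingHom K
          ((-1) ^ (∑ i, ν i) * (Nat.multinomial Finset.univ ν : ℤ)) =
        π ^ (p - 1) / ((p - 1).factorial : K) * p *
          (z * Nat.multinomial Finset.univ ν : ℤ) := by
      have := congrArg (Int.cast : ℤ → K) hz
      rw [eq_intCast]
      push_cast at this ⊢
      linear_combination π ^ (p - 1) / ((p - 1).factorial : K) *
        (Nat.multinomial Finset.univ ν : K) * this
    rw [dworkB_mul_prod_dworkB (by omega) π h.2, factor, norm_mul, norm_mul,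
      norm_pow_div_factorial_pred hπ, norm_natCast_prime, ← sq]
    exact mul_le_of_le_one_right (by positivity) (IsUltrametricDist.norm_intCast_le_one K _)
  · simp only [map_zero, mul_zero, sub_zero, norm_zero]
    positivity

end FrobeniusMatrix

section Norms

variable {N : ℕ} {K : Type*} [NormedField K] {f : MvPowerSeries (Fin N) K} {c : ℝ}

lemma coeffNormLE_Rnorm (hf : memR f) : CoeffNormLE f (Rnorm f) := fun ν => le_ciSup hf ν

lemma memR_of_mem_boundedSeries [IsUltrametricDist K] (hf : f ∈ boundedSeries (Fin N) K) :
    memR f := by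
  obtain ⟨c, hc⟩ := hf
  exact ⟨c, Set.forall_mem_range.2 hc⟩

lemma CoeffNormLE.Rnorm_le (hf : CoeffNormLE f c) : Rnorm f ≤ c := ciSup_le hf

lemma coeffNormLE_Snorm {n : ℕ} {a : Fin (N + 1) → Fin n → ℤ}
    {ξ : Msub a → MvPowerSeries (Fin N) K} (hξ : memS a ξ) (ρ : Msub a) :
    CoeffNormLE (ξ ρ) (Snorm a ξ) := by
  obtain ⟨B, hB⟩ := hξ
  have coeff_le (ρ : Msub a) : CoeffNormLE (ξ ρ) B := fun ν => hB ⟨(ρ, ν), rfl⟩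
  have bddAbove : BddAbove (Set.range fun ρ : Msub a => Rnorm (ξ ρ)) :=
    ⟨B, Set.forall_mem_range.2 fun ρ => (coeff_le ρ).Rnorm_le⟩
  exact (coeffNormLE_Rnorm ⟨B, Set.forall_mem_range.2 (coeff_le ρ)⟩).mono (le_ciSup bddAbove ρ)

lemma HasSumR.coeffHasSum [IsUltrametricDist K] {I : Type*} {F : I → MvPowerSeries (Fin N) K}
    (hF : ∀ i, F i ∈ boundedSeries (Fin N) K) (hf : f ∈ boundedSeries (Fin N) K)
    (hsum : HasSumR F f) : CoeffHasSum F f := fun ε hε => by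
  filter_upwards [hsum.eventually_lt_const hε] with s hs
  exact (coeffNormLE_Rnorm <| memR_of_mem_boundedSeries <|
    sub_mem hf <| sum_mem fun i _ => hF i).mono hs.le

end Norms

section Normalization

variable {σ K I : Type*} [NormedField K] [IsUltrametricDist K]

lemma CoeffHasSum.mul_right {F : I → MvPowerSeries σ K} {f g : MvPowerSeries σ K} {c : ℝ}
    (hsum : CoeffHasSum F f) (hg : CoeffNormLE g c) :
    CoeffHasSum (fun i => F i * g) (f * g) := fun ε hε => by
  have hc := hg.nonneg
  filter_upwards [hsum (ε / (c + 1)) (by positivity)] with s hs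
  rw [← Finset.sum_mul, ← sub_mul]
  refine (hs.mul hg).mono ?_
  rw [div_mul_eq_mul_div, div_le_iff₀ (by positivity)]
  nlinarith

lemma isNormalizedEigenvector_mul {p : ℕ} {hp : p ≠ 0} {T : I → I → MvPowerSeries σ K} {i₀ : I}
    {ξ : I → MvPowerSeries σ K} {g : MvPowerSeries σ K} {κ : K} {c d : ℝ}
    (hξ : ∀ ρ, CoeffNormLE (ξ ρ) c) (hg : CoeffNormLE g d) (hcd : c * d ≤ 1)
    (hξg : ξ i₀ * g = 1)
    (hsum : ∀ ρ, CoeffHasSum (fun ν => T ρ ν * MvPowerSeries.expand p hp (ξ ν)) (κ • ξ ρ)) :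
    IsNormalizedEigenvector hp T i₀ (κ • (ξ i₀ * MvPowerSeries.expand p hp g))
      (fun ρ => ξ ρ * g) where
  eq_one := hξg
  le_one ρ := ((hξ ρ).mul hg).mono hcd
  hasSum ρ := by
    have rescaled := (hsum ρ).mul_right (hg.expand hp)
    have eigenvalue_mul : κ • (ξ i₀ * MvPowerSeries.expand p hp g) * (ξ ρ * g) =
        κ • ξ ρ * MvPowerSeries.expand p hp g := by
      rw [smul_mul_assoc, smul_mul_assoc]
      congr 1
      linear_combination (ξ ρ * MvPowerSeries.expand p hp g) * hξg
    simpa only [eigenvalue_mul, map_mul, mul_assoc] using rescaled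

end Normalization

section EtaKernel

variable {n N p : ℕ} {a : Fin (N + 1) → Fin n → ℤ} {K : Type*}

lemma frobR_eq_expand [Field K] (hp : p ≠ 0) (f : MvPowerSeries (Fin N) K) :
    frobR p f = MvPowerSeries.expand p hp f := by
  ext ν
  rw [MvPowerSeries.coeff_apply, frobR]
  split_ifs with h
  · conv_rhs => rw [← h.choose_spec, MvPowerSeries.coeff_expand_smul]
    rfl
  · obtain ⟨i, hi⟩ : ∃ i, ¬ p ∣ ν i := by
      by_contra! hdvd
      choose μ hμ using hdvd
      exact h ⟨Finsupp.equivFunOnFinite.symm μ, by ext i; simp [hμ i]⟩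
    rw [MvPowerSeries.coeff_expand_of_not_dvd p hp f hi]

variable (p a) in
/-- The matrix of `α*` acting on the coefficients of a series in `S`: `etaTerm p a π ξ ρ ν` is
the entry at `(ρ, ν)` times `ξ_ν(λ^p)`. -/
noncomputable def etaKernel [Field K] (π : K) (ρ ν : Msub a) : MvPowerSeries (Fin N) K :=
  if (p : ℤ) • ν.1 - ρ.1 ∈ latticeM a then
    π ^ (ρ.1 0 - ν.1 0) • Bone p a π ((p : ℤ) • ν.1 - ρ.1)
  else 0

lemma etaTerm_eq_etaKernel_mul_expand [Field K] (hp : p ≠ 0) (π : K)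
    (ξ : Msub a → MvPowerSeries (Fin N) K) (ρ ν : Msub a) :
    etaTerm p a π ξ ρ.1 ν = etaKernel p a π ρ ν * MvPowerSeries.expand p hp (ξ ν) := by
  rw [etaTerm, etaKernel, frobR_eq_expand hp]
  split_ifs
  · rw [smul_mul_assoc]
  · rw [zero_mul]

lemma etaKernel_mem [Field K] {π : K} {A : Subalgebra K (MvPowerSeries (Fin N) K)}
    (hA : ∀ q : MvPolynomial (Fin N) K, (q : MvPowerSeries (Fin N) K) ∈ A) (ρ ν : Msub a) :
    etaKernel p a π ρ ν ∈ A := by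
  rw [etaKernel]
  split_ifs
  · rw [← coe_truncTotal_bone]
    exact A.smul_mem (hA _) _
  · exact zero_mem A

lemma etaKernel_self_eq [Field K] (hp : 1 ≤ p) {π : K} {μ0 : Msub a} (hμ0 : μ0.1 = hat (a 0)) :
    etaKernel p a π μ0 μ0 = Bone p a π ((p - 1) • hat (a 0)) := by
  have sub_eq_nsmul : (p : ℤ) • μ0.1 - μ0.1 = (p - 1) • hat (a 0) := by
    rw [hμ0, ← natCast_zsmul, Nat.cast_sub hp, sub_smul, Nat.cast_one, one_smul]
  rw [etaKernel, sub_eq_nsmul, if_pos (nsmul_mem_latticeM (hat_mem_latticeM a 0) _), sub_self,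
    zpow_zero, one_smul]

variable [NormedField K] [IsUltrametricDist K] {π : K} {μ0 : Msub a}

lemma isNormalizedEigenvector_etaKernel (hp : p ≠ 0) {ξ : Msub a → MvPowerSeries (Fin N) K}
    (hξ : memS a ξ) {κ : K} (heig : ∀ ρ : Msub a, HasSumR (etaTerm p a π ξ ρ.1) (κ • ξ ρ))
    (hn0 : Snorm a ξ = Rnorm (ξ μ0)) {g : MvPowerSeries (Fin N) K} (hg : memR g)
    (hξg : ξ μ0 * g = 1) :
    IsNormalizedEigenvector hp (etaKernel p a π) μ0
      (κ • (ξ μ0 * MvPowerSeries.expand p hp g)) (fun ρ => ξ ρ * g) := by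
  have ξ_le (ρ : Msub a) : CoeffNormLE (ξ ρ) (Snorm a ξ) := coeffNormLE_Snorm hξ ρ
  have g_le := coeffNormLE_Rnorm hg
  have ξμ0_le := (ξ_le μ0).of_mul_eq_one g_le hξg
  have norm_mul_norm : ‖MvPowerSeries.constantCoeff (ξ μ0)‖ * ‖MvPowerSeries.constantCoeff g‖ =
      1 := by
    rw [← norm_mul, ← map_mul, hξg, map_one, norm_one]
  refine isNormalizedEigenvector_mul (fun ρ => (ξ_le ρ).mono (hn0.trans_le ξμ0_le.Rnorm_le))
    (g_le.of_mul_eq_one (ξ_le μ0) ((mul_comm _ _).trans hξg)) norm_mul_norm.le hξg fun ρ => ?_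
  have sum := heig ρ
  simp only [funext (etaTerm_eq_etaKernel_mul_expand hp π ξ ρ)] at sum
  refine sum.coeffHasSum (fun ν => mul_mem (etaKernel_mem coe_mem_boundedSeries ρ ν) ?_)
    (Subalgebra.smul_mem _ ?_ κ)
  · exact ⟨_, (ξ_le ν).expand hp⟩
  · exact ⟨_, ξ_le ρ⟩

variable [Fact p.Prime] [NormedAlgebra ℚ_[p] K]

lemma isDominantKernel_etaKernel (hp2 : p ≠ 2) (hπ : π ^ (p - 1) = -(p : K))
    (hΔ : uniqueInteriorPoint a) (hμ0 : μ0.1 = hat (a 0)) {Φ : MvPolynomial (Fin N) K}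
    (hΦ : Φ = MvPolynomial.map (Int.castRingHom K) (phiOneInt p a)) :
    IsDominantKernel (polynomialsAway Φ) Φ (π ^ (p - 1) / ((p - 1).factorial : K)) μ0
      (etaKernel p a π) where
  mem := etaKernel_mem coe_mem_uniformClosure
  le_of_ne ρ ν hν := by
    rw [norm_pow_div_factorial_pred hπ, etaKernel]
    split_ifs
    · have two_le : 2 ≤ ν.1 0 := by
        have := one_le_zero_of_mem_latticeMint ν.2
        have ne_one : ν.1 0 ≠ 1 := fun h =>
          hν (Subtype.ext ((eq_hat_of_mem_latticeMint hΔ ν.2 h).trans hμ0.symm))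
        omega
      exact coeffNormLE_zpow_smul_bone hp2 hπ two_le (one_le_zero_of_mem_latticeMint ρ.2) (by simp)
    · exact CoeffNormLE.zero (by positivity)
  sub_le := by
    rw [norm_pow_div_factorial_pred hπ, etaKernel_self_eq (Fact.out : p.Prime).one_le hμ0, hΦ]
    exact coeffNormLE_bone_sub_smul_phiOne hπ

end EtaKernel

section Ratio

open MvPowerSeries

variable {n N p : ℕ} {K : Type*} [NormedField K]

lemma inv_frobR_eq_expand (hp : p ≠ 0) {f g : MvPowerSeries (Fin N) K} (hfg : f * g = 1) :
    (frobR p f)⁻¹ = expand p hp g := by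
  have expand_mul : expand p hp f * expand p hp g = 1 := by rw [← map_mul, hfg, map_one]
  have constantCoeff_ne_zero : constantCoeff (expand p hp f) ≠ 0 :=
    left_ne_zero_of_mul_eq_one (by rw [← map_mul, expand_mul, map_one])
  rw [frobR_eq_expand hp, MvPowerSeries.inv_eq_iff_mul_eq_one constantCoeff_ne_zero, mul_comm,
    expand_mul]

variable [Fact p.Prime] [IsUltrametricDist K] [NormedAlgebra ℚ_[p] K]
  {π : K} {a : Fin (N + 1) → Fin n → ℤ} {μ0 : Msub a}

lemma constantCoeff_ne_zero_and_mem_uniformClosure (hp2 : p ≠ 2)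
    (hπ : π ^ (p - 1) = -(p : K)) (hΔ : uniqueInteriorPoint a) (hμ0 : μ0.1 = hat (a 0))
    {hp : p ≠ 0} {u : MvPowerSeries (Fin N) K} {ζ : Msub a → MvPowerSeries (Fin N) K}
    (hζ : IsNormalizedEigenvector hp (etaKernel p a π) μ0 u ζ) :
    constantCoeff u ≠ 0 ∧ u ∈ uniformClosure
      (polynomialsAway (MvPolynomial.map (Int.castRingHom K) (phiOneInt p a))) := by
  have hT := isDominantKernel_etaKernel hp2 hπ hΔ hμ0 rfl
  have constantCoeff_Φ := constantCoeff_map_phiOneInt (K := K) a hp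
  have Φ_le := coeffNormLE_map_intCast (K := K) (phiOneInt p a)
  have inv_p_lt_one : (p : ℝ)⁻¹ < 1 :=
    inv_lt_one_of_one_lt₀ (Nat.one_lt_cast.2 (Fact.out : p.Prime).one_lt)
  have norm_c := norm_pow_div_factorial_pred hπ
  have c_ne_zero : π ^ (p - 1) / ((p - 1).factorial : K) ≠ 0 :=
    norm_ne_zero_iff.1 (norm_c.trans_ne (inv_ne_zero (Nat.cast_ne_zero.2 hp)))
  have inv_mul_Φ := MvPowerSeries.inv_mul_cancel _ (constantCoeff_Φ.trans_ne one_ne_zero)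
  exact ⟨hζ.constantCoeff_eigenvalue_ne_zero hT c_ne_zero (norm_c.trans_lt inv_p_lt_one)
      inv_mul_Φ (coeffNormLE_inv_coe constantCoeff_Φ Φ_le),
    hζ.eigenvalue_mem_uniformClosure hT c_ne_zero (norm_c.trans_lt inv_p_lt_one)
      inv_mul_Φ (coeffNormLE_inv_coe constantCoeff_Φ Φ_le)
      (inv_mem_uniformClosure_polynomialsAway constantCoeff_Φ Φ_le)
      fun _ => expand_mem_uniformClosure constantCoeff_Φ Φ_le hp
        (coeffNormLE_expand_sub_pow hp _) ((norm_natCast_prime p).trans_lt inv_p_lt_one)⟩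

end Ratio

end AHG

theorem stmt_15_general (p : ℕ) [Fact p.Prime] (hp2 : p ≠ 2)
    {K : Type*} [NormedField K] [IsUltrametricDist K] [CompleteSpace K] [NormedAlgebra ℚ_[p] K]
    {π : K} (hπ : π ^ (p - 1) = -(p : K)) {n N : ℕ} {a : Fin (N + 1) → Fin n → ℤ}
    (hΔ : AHG.uniqueInteriorPoint a) {μ0 : AHG.Msub a} (hμ0 : μ0.1 = AHG.hat (a 0))
    {ξ : AHG.Msub a → MvPowerSeries (Fin N) K} (hξ : AHG.memS a ξ) {κ : K}
    (heig : ∀ ρ : AHG.Msub a, AHG.HasSumR (AHG.etaTerm p a π ξ ρ.1) (κ • ξ ρ))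
    (hinv : AHG.invR (ξ μ0)) (hn0 : AHG.Snorm a ξ = AHG.Rnorm (ξ μ0)) :
    AHG.memR' p a (ξ μ0 * (AHG.frobR p (ξ μ0))⁻¹) := by
  have hp : p ≠ 0 := (Fact.out : p.Prime).ne_zero
  obtain ⟨-, g, hg, hξg⟩ := hinv
  obtain ⟨constantCoeff_ne_zero, eigenvalue_mem⟩ :=
    AHG.constantCoeff_ne_zero_and_mem_uniformClosure hp2 hπ hΔ hμ0
      (AHG.isNormalizedEigenvector_etaKernel hp hξ heig hn0 hg hξg)
  have κ_ne_zero : κ ≠ 0 := by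
    rintro rfl
    rw [zero_smul, map_zero] at constantCoeff_ne_zero
    exact constantCoeff_ne_zero rfl
  have ratio_eq : ξ μ0 * (AHG.frobR p (ξ μ0))⁻¹ =
      κ⁻¹ • κ • (ξ μ0 * MvPowerSeries.expand p hp g) := by
    rw [inv_smul_smul₀ κ_ne_zero, AHG.inv_frobR_eq_expand hp hξg]
  rw [ratio_eq]
  exact AHG.memR'_of_mem_uniformClosure (AHG.constantCoeff_map_phiOneInt a hp)
    (AHG.coeffNormLE_map_intCast _) (AHG.eval_map_phiOneInt p a)
    (Subalgebra.smul_mem _ eigenvalue_mem κ⁻¹)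

/-- under the hypotheses of Statement 14, the ratio
`ξ_{â_0}(λ)/ξ_{â_0}(λ^p)` belongs to `R'`. -/
theorem stmt_15 (p : ℕ) [Fact p.Prime] (hp2 : p ≠ 2)
    {K : Type*} [NormedField K] [IsUltrametricDist K] [CompleteSpace K] [IsAlgClosed K]
    (ι : ℚ_[p] →+* K) (hι : ∀ x, ‖ι x‖ = ‖x‖)
    (π : K) (hπ : π ^ (p - 1) = -(p : K))
    (n N : ℕ) (hn : 0 < n) (hN : 0 < N) (a : Fin (N + 1) → Fin n → ℤ)
    (hΔ : AHG.uniqueInteriorPoint a)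
    (μ0 : AHG.Msub a) (hμ0 : μ0.1 = AHG.hat (a 0))
    (ξ : AHG.Msub a → MvPowerSeries (Fin N) K) (hξ : AHG.memS a ξ) (κ : K)
    (heig : ∀ ρ : AHG.Msub a, AHG.HasSumR (AHG.etaTerm p a π ξ ρ.1) (κ • ξ ρ))
    (hinv : AHG.invR (ξ μ0)) (hn0 : AHG.Snorm a ξ = AHG.Rnorm (ξ μ0)) :
    AHG.memR' p a (ξ μ0 * (AHG.frobR p (ξ μ0))⁻¹) := by
  let : NormedAlgebra ℚ_[p] K :=
    { ι.toAlgebra with norm_smul_le := fun r x => (norm_mul (ι r) x).trans_le (by rw [hι]) }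
  exact stmt_15_general p hp2 hπ hΔ hμ0 hξ heig hinv hn0
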